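/- arXiv:2111.11917 — 7 statements merged into one kernel-verified Lean document; each statement's English description precedes it below -/
import Mathlib

section
/- Let A, V, q, M, g, g^σ be as in the context. For every point (x,ξ) ∈ ℝⁿ×ℝⁿ and every (t,τ) ∈ ℝⁿ×ℝⁿ, the supremum over (y,η) ≠ (0,0) of (t·η − y·τ)² / g_{(x,ξ)}(y,η) equals g^σ_{(x,ξ)}(t,τ) = |t|²·M(x,ξ)^{1/γ} + |τ|²·M(x,ξ)^{1/κ}. Consequently the uncertainty parameter λ_g(x,ξ) := inf over (t,τ) ≠ (0,0) of (g^σ_{(x,ξ)}(t,τ)/g_{(x,ξ)}(t,τ))^{1/2} equals M(x,ξ)^{(κ+γ)/(2κγ)}, and λ_g(x,ξ) ≥ 1 for all (x,ξ); that is, the metric g^{(A,V)} satisfies the uncertainty principle. -/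
open MeasureTheory RealInnerProductSpace
noncomputable section

/-- ℝⁿ with the Euclidean norm. -/
abbrev E (n : ℕ) : Type := EuclideanSpace ℝ (Fin n)

/-- A continuous `Γ : ℝⁿ → ℝ` is a τ-function (with parameter q). -/
def IsTauFunction {n : ℕ} (τ q : ℝ) (Γ : E n → ℝ) : Prop :=
  Continuous Γ ∧ (∀ x, 0 < Γ x + q / 4) ∧
  ∃ C₁ > (0:ℝ), ∃ R > (0:ℝ), ∀ x y : E n, R ≤ ‖x‖ → R ≤ ‖y‖ →
    C₁ * |(q / 2 + Γ x) ^ (1 / (2 * τ)) - (q / 2 + Γ y) ^ (1 / (2 * τ))| ≤ ‖x - y‖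

/-- The Hörmander metric g^{(A,V)}: g_{(x,ξ)}(t,τ') = |t|²M^{-1/κ} + |τ'|²M^{-1/γ},
where M(x,ξ) = q + V(x) + A(ξ). -/
def gMet {n : ℕ} (κ γ q : ℝ) (A V : E n → ℝ) (X T : E n × E n) : ℝ :=
  ‖T.1‖ ^ 2 * (q + V X.1 + A X.2) ^ (-(1 / κ)) +
    ‖T.2‖ ^ 2 * (q + V X.1 + A X.2) ^ (-(1 / γ))

/-- The dual form g^σ_{(x,ξ)}(t,τ') = |t|²M^{1/γ} + |τ'|²M^{1/κ}. -/
def gSig {n : ℕ} (κ γ q : ℝ) (A V : E n → ℝ) (X T : E n × E n) : ℝ :=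
  ‖T.1‖ ^ 2 * (q + V X.1 + A X.2) ^ (1 / γ) +
    ‖T.2‖ ^ 2 * (q + V X.1 + A X.2) ^ (1 / κ)

/-!
At a fixed phase-space point `g` is the diagonal quadratic form with weights `a = M^{-1/κ}` and
`b = M^{-1/γ}`, and `g^σ` the one with weights `b⁻¹` and `a⁻¹`. The weighted Cauchy–Schwarz
inequality bounds `σ(T, Y)²` by `g^σ(T) g(Y)`, with equality when `Y` is the `g`-gradient of
`σ(T, ·)`. Moreover `g^σ = (a b)⁻¹ g`, so the ratio defining the uncertainty parameter is constant.
-/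

section WeightedSqNorm

variable {F : Type*}

/-- The diagonal quadratic form `a |t|² + b |τ|²` on phase space `F × F`. Both the metric `g` and
its dual `g^σ` at a given point have this shape. -/
def weightedSqNorm [Norm F] (a b : ℝ) (T : F × F) : ℝ :=
  ‖T.1‖ ^ 2 * a + ‖T.2‖ ^ 2 * b

theorem weightedSqNorm_pos [NormedAddCommGroup F] {a b : ℝ} (ha : 0 < a) (hb : 0 < b)
    {T : F × F} (hT : T ≠ 0) : 0 < weightedSqNorm a b T := by
  unfold weightedSqNorm
  have component_ne_zero : T.1 ≠ 0 ∨ T.2 ≠ 0 := by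
    rwa [ne_eq, Prod.ext_iff, not_and_or] at hT
  rcases component_ne_zero with h | h
  all_goals
    have := norm_pos_iff.mpr h
    positivity

theorem weightedSqNorm_inv_swap [Norm F] {a b : ℝ} (ha : a ≠ 0) (hb : b ≠ 0) (T : F × F) :
    weightedSqNorm b⁻¹ a⁻¹ T = (a * b)⁻¹ * weightedSqNorm a b T := by
  unfold weightedSqNorm
  field_simp

theorem isGLB_weightedSqNorm_div_rpow_half [NormedAddCommGroup F] [Nontrivial F] {a b : ℝ}
    (ha : 0 < a) (hb : 0 < b) :
    IsGLB {r : ℝ | ∃ T : F × F, T ≠ 0 ∧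
        r = (weightedSqNorm b⁻¹ a⁻¹ T / weightedSqNorm a b T) ^ ((1 : ℝ) / 2)}
      ((a * b)⁻¹ ^ ((1 : ℝ) / 2)) := by
  have ratio_eq (T : F × F) (hT : T ≠ 0) :
      weightedSqNorm b⁻¹ a⁻¹ T / weightedSqNorm a b T = (a * b)⁻¹ := by
    rw [weightedSqNorm_inv_swap ha.ne' hb.ne',
      mul_div_cancel_right₀ _ (weightedSqNorm_pos ha hb hT).ne']
  obtain ⟨T₀, hT₀⟩ := exists_ne (0 : F × F)
  refine IsLeast.isGLB ⟨⟨T₀, hT₀, by rw [ratio_eq T₀ hT₀]⟩, ?_⟩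
  rintro r ⟨T, hT, rfl⟩
  rw [ratio_eq T hT]

end WeightedSqNorm

section Symplectic

variable {F : Type*} [NormedAddCommGroup F] [InnerProductSpace ℝ F] {a b : ℝ}

/-- The canonical symplectic form `t · η - y · τ` of `(t, τ)` and `(y, η)` on phase space. -/
def symplecticForm (T Y : F × F) : ℝ :=
  ⟪T.1, Y.2⟫ - ⟪Y.1, T.2⟫

/-- The vector representing `symplecticForm T` with respect to the inner product that polarizes
`weightedSqNorm a b`; it is the extremal direction in the definition of the dual form. -/
def symplecticGradient (a b : ℝ) (T : F × F) : F × F :=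
  (-(a⁻¹ • T.2), b⁻¹ • T.1)

theorem symplecticForm_sq_le (ha : 0 < a) (hb : 0 < b) (T Y : F × F) :
    symplecticForm T Y ^ 2 ≤ weightedSqNorm b⁻¹ a⁻¹ T * weightedSqNorm a b Y := by
  have abs_form_le : |symplecticForm T Y| ≤ ‖T.1‖ * ‖Y.2‖ + ‖Y.1‖ * ‖T.2‖ :=
    (abs_sub _ _).trans
      (add_le_add (abs_real_inner_le_norm _ _) (abs_real_inner_le_norm _ _))
  have lagrange : weightedSqNorm b⁻¹ a⁻¹ T * weightedSqNorm a b Y =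
      (‖T.1‖ * ‖Y.2‖ + ‖Y.1‖ * ‖T.2‖) ^ 2 +
        (‖T.1‖ * ‖Y.1‖ * a - ‖T.2‖ * ‖Y.2‖ * b) ^ 2 / (a * b) := by
    unfold weightedSqNorm
    field_simp
    ring
  calc symplecticForm T Y ^ 2
      ≤ (‖T.1‖ * ‖Y.2‖ + ‖Y.1‖ * ‖T.2‖) ^ 2 := sq_le_sq.mpr (abs_form_le.trans (le_abs_self _))
    _ ≤ weightedSqNorm b⁻¹ a⁻¹ T * weightedSqNorm a b Y := by
        rw [lagrange]
        exact le_add_of_nonneg_right (by positivity)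

theorem symplecticForm_symplecticGradient (a b : ℝ) (T : F × F) :
    symplecticForm T (symplecticGradient a b T) = weightedSqNorm b⁻¹ a⁻¹ T := by
  simp only [symplecticForm, symplecticGradient, weightedSqNorm, inner_neg_left,
    real_inner_smul_left, real_inner_smul_right, real_inner_self_eq_norm_sq]
  ring

theorem weightedSqNorm_symplecticGradient (ha : a ≠ 0) (hb : b ≠ 0) (T : F × F) :
    weightedSqNorm a b (symplecticGradient a b T) = weightedSqNorm b⁻¹ a⁻¹ T := by
  simp only [symplecticGradient, weightedSqNorm, norm_neg, norm_smul, Real.norm_eq_abs, mul_pow,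
    sq_abs]
  field_simp
  ring

theorem symplecticGradient_ne_zero (ha : a ≠ 0) (hb : b ≠ 0) {T : F × F} (hT : T ≠ 0) :
    symplecticGradient a b T ≠ 0 := by
  contrapose! hT
  simpa [symplecticGradient, Prod.ext_iff, ha, hb, and_comm] using hT

theorem isLUB_symplecticForm_sq_div [Nontrivial F] (ha : 0 < a) (hb : 0 < b) (T : F × F) :
    IsLUB {r : ℝ | ∃ Y : F × F, Y ≠ 0 ∧ r = symplecticForm T Y ^ 2 / weightedSqNorm a b Y}
      (weightedSqNorm b⁻¹ a⁻¹ T) := by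
  refine IsGreatest.isLUB ⟨?_, ?_⟩
  · rcases eq_or_ne T 0 with rfl | hT
    · obtain ⟨Y, hY⟩ := exists_ne (0 : F × F)
      exact ⟨Y, hY, by simp [symplecticForm, weightedSqNorm]⟩
    · refine ⟨symplecticGradient a b T, symplecticGradient_ne_zero ha.ne' hb.ne' hT, ?_⟩
      have dual_pos := weightedSqNorm_pos (inv_pos.mpr hb) (inv_pos.mpr ha) hT
      rw [symplecticForm_symplecticGradient, weightedSqNorm_symplecticGradient ha.ne' hb.ne', sq,
        mul_div_cancel_right₀ _ dual_pos.ne']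
  · rintro r ⟨Y, hY, rfl⟩
    exact (div_le_iff₀ (weightedSqNorm_pos ha hb hY)).mpr (symplecticForm_sq_le ha hb T Y)

end Symplectic

theorem inv_rpow_mul_rpow_rpow_half {m κ γ : ℝ} (hm : 0 < m) (hκ : κ ≠ 0) (hγ : γ ≠ 0) :
    (m ^ (-(1 / κ)) * m ^ (-(1 / γ)))⁻¹ ^ ((1 : ℝ) / 2) = m ^ ((κ + γ) / (2 * κ * γ)) := by
  rw [← Real.rpow_add hm, ← Real.rpow_neg hm.le, ← Real.rpow_mul hm.le]
  congr 1
  field_simp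
  ring

theorem statement0_general {F : Type*} [NormedAddCommGroup F] [InnerProductSpace ℝ F]
    [Nontrivial F] {κ γ : ℝ} (hκ : 0 < κ) (hγ : 0 < γ) (M : F × F → ℝ) (hM : ∀ X, 1 ≤ M X) :
    (∀ X T : F × F,
      IsLUB {r : ℝ | ∃ Y : F × F, Y ≠ 0 ∧
          r = symplecticForm T Y ^ 2 /
            weightedSqNorm (M X ^ (-(1 / κ))) (M X ^ (-(1 / γ))) Y}
        (weightedSqNorm (M X ^ (1 / γ)) (M X ^ (1 / κ)) T)) ∧
    (∀ X : F × F,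
      IsGLB {r : ℝ | ∃ T : F × F, T ≠ 0 ∧
          r = (weightedSqNorm (M X ^ (1 / γ)) (M X ^ (1 / κ)) T /
            weightedSqNorm (M X ^ (-(1 / κ))) (M X ^ (-(1 / γ))) T) ^ ((1 : ℝ) / 2)}
        (M X ^ ((κ + γ) / (2 * κ * γ)))) ∧
    (∀ X : F × F, 1 ≤ M X ^ ((κ + γ) / (2 * κ * γ))) := by
  have M_pos (X : F × F) : 0 < M X := one_pos.trans_le (hM X)
  have weight_pos (X : F × F) (s : ℝ) : 0 < M X ^ s := Real.rpow_pos_of_pos (M_pos X) s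
  have inv_weight (X : F × F) (s : ℝ) : (M X ^ (-s))⁻¹ = M X ^ s := by
    rw [Real.rpow_neg (M_pos X).le, inv_inv]
  refine ⟨fun X T => ?_, fun X => ?_, fun X => Real.one_le_rpow (hM X) (by positivity)⟩
  · simpa only [inv_weight] using
      isLUB_symplecticForm_sq_div (weight_pos X (-(1 / κ))) (weight_pos X (-(1 / γ))) T
  · rw [← inv_rpow_mul_rpow_rpow_half (M_pos X) hκ.ne' hγ.ne']
    simpa only [inv_weight] using isGLB_weightedSqNorm_div_rpow_half (F := F)
      (weight_pos X (-(1 / κ))) (weight_pos X (-(1 / γ)))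

/-- the supremum over Y ≠ 0 of σ(Y,T)²/g_X(Y) equals g^σ_X(T), the
uncertainty parameter λ_g(X) = inf_{T ≠ 0} (g^σ_X(T)/g_X(T))^{1/2} equals
M(X)^{(κ+γ)/(2κγ)}, and λ_g(X) ≥ 1 for all X. -/
theorem statement0 {n : ℕ} (hn : 1 ≤ n) (κ γ q : ℝ) (hκ : 0 < κ) (hγ : 0 < γ) (hq : 0 < q)
    (A V : E n → ℝ) (hA : IsTauFunction γ q A) (hV : IsTauFunction κ q V)
    (hM : ∀ x ξ : E n, 1 ≤ q + V x + A ξ) :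
    (∀ X T : E n × E n,
      IsLUB {r : ℝ | ∃ Y : E n × E n, Y ≠ 0 ∧
          r = (⟪T.1, Y.2⟫ - ⟪Y.1, T.2⟫) ^ 2 / gMet κ γ q A V X Y}
        (gSig κ γ q A V X T)) ∧
    (∀ X : E n × E n,
      IsGLB {r : ℝ | ∃ T : E n × E n, T ≠ 0 ∧
          r = (gSig κ γ q A V X T / gMet κ γ q A V X T) ^ ((1:ℝ) / 2)}
        ((q + V X.1 + A X.2) ^ ((κ + γ) / (2 * κ * γ)))) ∧
    (∀ X : E n × E n, 1 ≤ (q + V X.1 + A X.2) ^ ((κ + γ) / (2 * κ * γ))) := by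
  have : NeZero n := ⟨Nat.one_le_iff_ne_zero.mp hn⟩
  exact statement0_general hκ hγ (fun X => q + V X.1 + A X.2) fun X => hM X.1 X.2
end
end

section
/- Let A, V, q, M, g be as in the context. Then the metric g^{(A,V)} is slowly varying (continuous): there exists a constant C ≥ 1 such that for all X=(x,ξ) and Y=(y,η) in ℝⁿ×ℝⁿ, if g_X(X−Y) ≤ C^{-1}, then g_Y(T) ≤ C·g_X(T) for every T ∈ ℝⁿ×ℝⁿ. -/
open MeasureTheory RealInnerProductSpace
noncomputable section

/-! With `w = (q/2 + Γ)^{1/(2τ)}`, the Lipschitz bound at infinity and compactness of balls give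
`|w x - w y| ≤ c |x - y| + B` everywhere, and as `w` is bounded below by a positive constant,
`w x ≤ c |x - y| + K w y`. At a phase-space point `X = (x, ξ)` one of `q/2 + V x`, `q/2 + A ξ` is at
least half of their sum `M X`. If `g_X(X - Y)` is small, then `c |x - y|` (respectively
`c |ξ - η|`) is small compared with `M X ^ {1/(2κ)}` (respectively `M X ^ {1/(2γ)}`) and can be
absorbed into the left-hand side, leaving `M X ≤ D M Y`. As `g_Y` depends on `Y` only through
negative powers of `M Y`, it is dominated by `g_X`. -/

open scoped NNReal

section CoarseLipschitz

variable {H Z : Type*} [NormedAddCommGroup H] [NormedSpace ℝ H] [PseudoMetricSpace Z]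

theorem exists_norm_eq_dist_le {R : ℝ} {x y : H} (hy : ‖y‖ ≤ R) (hx : R ≤ ‖x‖) :
    ∃ z : H, ‖z‖ = R ∧ dist z x ≤ dist y x := by
  have hR : 0 ≤ R := (norm_nonneg y).trans hy
  rcases eq_or_ne x 0 with rfl | hx0
  · exact ⟨0, le_antisymm (by simpa using hR) hx, by simp⟩
  · have hxpos : 0 < ‖x‖ := norm_pos_iff.2 hx0
    have hratio : R / ‖x‖ ≤ 1 := (div_le_one hxpos).2 hx
    refine ⟨(R / ‖x‖) • x, ?_, ?_⟩
    · rw [norm_smul, Real.norm_of_nonneg (by positivity), div_mul_cancel₀ _ hxpos.ne']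
    · calc dist ((R / ‖x‖) • x) x = ‖(1 - R / ‖x‖) • x‖ := by
            rw [dist_comm, dist_eq_norm, sub_smul, one_smul]
        _ = ‖x‖ - R := by
            rw [norm_smul, Real.norm_of_nonneg (sub_nonneg.2 hratio), sub_mul, one_mul,
              div_mul_cancel₀ _ hxpos.ne']
        _ ≤ ‖x‖ - ‖y‖ := by linarith
        _ ≤ dist y x := by rw [dist_comm, dist_eq_norm]; exact norm_sub_norm_le x y

theorem dist_le_mul_add_diam_of_lipschitzOnWith {f : H → Z} {K : ℝ≥0} {R : ℝ}
    (hLip : LipschitzOnWith K f {x | R ≤ ‖x‖})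
    (hbdd : Bornology.IsBounded (f '' Metric.closedBall 0 R)) (x y : H) :
    dist (f x) (f y) ≤ K * dist x y + Metric.diam (f '' Metric.closedBall 0 R) := by
  set B := Metric.diam (f '' Metric.closedBall 0 R)
  have inside {u v : H} (hu : ‖u‖ ≤ R) (hv : ‖v‖ ≤ R) : dist (f u) (f v) ≤ B :=
    Metric.dist_le_diam_of_mem hbdd ⟨u, by simpa using hu, rfl⟩ ⟨v, by simpa using hv, rfl⟩
  have across {u v : H} (hu : ‖u‖ ≤ R) (hv : R ≤ ‖v‖) :
      dist (f u) (f v) ≤ K * dist u v + B := by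
    obtain ⟨z, hz, hzv⟩ := exists_norm_eq_dist_le hu hv
    calc dist (f u) (f v) ≤ dist (f u) (f z) + dist (f z) (f v) := dist_triangle _ _ _
      _ ≤ B + K * dist z v := add_le_add (inside hu hz.le) (hLip.dist_le_mul z hz.ge v hv)
      _ ≤ B + K * dist u v := by gcongr
      _ = K * dist u v + B := add_comm _ _
  rcases le_total ‖x‖ R with hx | hx <;> rcases le_total ‖y‖ R with hy | hy
  · exact (inside hx hy).trans (le_add_of_nonneg_left (by positivity))
  · exact across hx hy
  · simpa only [dist_comm] using across hy hx
  · exact (hLip.dist_le_mul x hx y hy).trans (le_add_of_nonneg_right Metric.diam_nonneg)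

end CoarseLipschitz

section Rpow

variable {a b D L s τ r δ : ℝ}

theorem le_rpow_inv_mul_of_rpow_le_mul_rpow (ha : 0 ≤ a) (hb : 0 ≤ b) (hL : 0 ≤ L) (hs : 0 < s)
    (h : a ^ s ≤ L * b ^ s) : a ≤ L ^ s⁻¹ * b := by
  rwa [← Real.rpow_le_rpow_iff ha (by positivity) hs, Real.mul_rpow (by positivity) hb,
    Real.rpow_inv_rpow hL hs.ne']

theorem rpow_neg_le_mul_rpow_neg (ha : 0 < a) (hb : 0 ≤ b) (hD : 0 < D) (hs : 0 ≤ s)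
    (h : a ≤ D * b) : b ^ (-s) ≤ D ^ s * a ^ (-s) :=
  calc b ^ (-s) = D ^ s * (D * b) ^ (-s) := by
        rw [Real.mul_rpow hD.le hb, ← mul_assoc, ← Real.rpow_add hD, add_neg_cancel,
          Real.rpow_zero, one_mul]
    _ ≤ D ^ s * a ^ (-s) :=
        mul_le_mul_of_nonneg_left (Real.rpow_le_rpow_of_nonpos ha h (neg_nonpos.2 hs))
          (by positivity)

theorem le_mul_rpow_of_sq_mul_rpow_neg_le (ha : 0 < a) (hδ : 0 ≤ δ)
    (h : r ^ 2 * a ^ (-(1 / τ)) ≤ δ ^ 2) : r ≤ δ * a ^ (1 / (2 * τ)) := by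
  have hpow : a ^ (-(1 / τ)) = ((a ^ (1 / (2 * τ))) ^ 2)⁻¹ := by
    rw [Real.rpow_neg ha.le, ← Real.rpow_mul_natCast ha.le]
    congr 2
    push_cast
    ring
  rw [hpow, ← div_eq_mul_inv, div_le_iff₀ (by positivity), ← mul_pow] at h
  exact le_of_sq_le_sq h (by positivity)

end Rpow

/-- The function `(q/2 + Γ)^{1/(2τ)}`, which is Lipschitz near infinity when `Γ` is a
`τ`-function. -/
def tauWeight {n : ℕ} (τ q : ℝ) (Γ : E n → ℝ) (x : E n) : ℝ :=
  (q / 2 + Γ x) ^ (1 / (2 * τ))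

namespace IsTauFunction

variable {n : ℕ} {τ q : ℝ} {Γ : E n → ℝ}

theorem quarter_lt (h : IsTauFunction τ q Γ) (x : E n) : q / 4 < q / 2 + Γ x := by
  linarith [h.2.1 x]

theorem exists_lipschitzOnWith_tauWeight (h : IsTauFunction τ q Γ) :
    ∃ (K : ℝ≥0) (R : ℝ), 0 < K ∧ LipschitzOnWith K (tauWeight τ q Γ) {x | R ≤ ‖x‖} := by
  obtain ⟨-, -, C₁, hC₁, R, -, hLip⟩ := h
  refine ⟨.mk C₁⁻¹ (by positivity), R, inv_pos.2 hC₁, .of_dist_le_mul fun x hx y hy ↦ ?_⟩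
  rw [NNReal.coe_mk, inv_mul_eq_div, le_div_iff₀' hC₁, Real.dist_eq, dist_eq_norm]
  exact hLip x y hx hy

theorem continuous_tauWeight (h : IsTauFunction τ q Γ) (hτ : 0 < τ) :
    Continuous (tauWeight τ q Γ) :=
  (continuous_const.add h.1).rpow_const fun _ ↦ .inr (by positivity)

theorem exists_tauWeight_le (h : IsTauFunction τ q Γ) (hτ : 0 < τ) (hq : 0 < q) :
    ∃ c > 0, ∃ K > 0, ∀ x y, tauWeight τ q Γ x ≤ c * ‖x - y‖ + K * tauWeight τ q Γ y := by
  obtain ⟨c, R, hc, hLip⟩ := h.exists_lipschitzOnWith_tauWeight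
  set B := Metric.diam (tauWeight τ q Γ '' Metric.closedBall 0 R)
  have : 0 ≤ B := Metric.diam_nonneg
  have hcoarse (x y : E n) : tauWeight τ q Γ x - tauWeight τ q Γ y ≤ c * ‖x - y‖ + B := by
    rw [← dist_eq_norm]
    exact (Real.sub_le_dist _ _).trans <| dist_le_mul_add_diam_of_lipschitzOnWith hLip
      ((isCompact_closedBall 0 R).image (h.continuous_tauWeight hτ)).isBounded x y
  set w₀ := (q / 4) ^ (1 / (2 * τ))
  have hw₀ : 0 < w₀ := by positivity
  have hw (y : E n) : w₀ ≤ tauWeight τ q Γ y :=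
    Real.rpow_le_rpow (by positivity) (h.quarter_lt y).le (by positivity)
  refine ⟨c, hc, B / w₀ + 1, by positivity, fun x y ↦ ?_⟩
  have habsorb : B ≤ B / w₀ * tauWeight τ q Γ y :=
    calc B = B / w₀ * w₀ := (div_mul_cancel₀ _ hw₀.ne').symm
      _ ≤ B / w₀ * tauWeight τ q Γ y := by gcongr; exact hw y
  linarith [hcoarse x y]

theorem exists_le_mul_of_sq_mul_rpow_neg_le (h : IsTauFunction τ q Γ) (hτ : 0 < τ) (hq : 0 < q) :
    ∃ ε > 0, ∃ D > 0, ∀ (x y : E n) (m : ℝ), 0 < m → m ≤ 2 * (q / 2 + Γ x) →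
      ‖x - y‖ ^ 2 * m ^ (-(1 / τ)) ≤ ε → m ≤ D * (q / 2 + Γ y) := by
  obtain ⟨c, hc, K, hK, hw⟩ := h.exists_tauWeight_le hτ hq
  have hpos (x : E n) : 0 < q / 2 + Γ x := by linarith [h.quarter_lt x]
  set s := 1 / (2 * τ)
  have hs : 0 < s := by positivity
  set δ := (2 * (2 ^ s * c))⁻¹
  refine ⟨δ ^ 2, by positivity, (2 * (2 ^ s * K)) ^ s⁻¹, by positivity, fun x y m hm hmx hxy ↦ ?_⟩
  have hnear : ‖x - y‖ ≤ δ * m ^ s :=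
    le_mul_rpow_of_sq_mul_rpow_neg_le hm (by positivity) hxy
  have hhalf : m ^ s ≤ m ^ s / 2 + 2 ^ s * K * tauWeight τ q Γ y :=
    calc m ^ s ≤ (2 * (q / 2 + Γ x)) ^ s := by gcongr
      _ = 2 ^ s * tauWeight τ q Γ x := Real.mul_rpow zero_le_two (hpos x).le
      _ ≤ 2 ^ s * (c * (δ * m ^ s) + K * tauWeight τ q Γ y) := by
          gcongr
          exact (hw x y).trans (by gcongr)
      _ = m ^ s / 2 + 2 ^ s * K * tauWeight τ q Γ y := by
          simp only [δ]
          field_simp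
  refine le_rpow_inv_mul_of_rpow_le_mul_rpow hm.le (hpos y).le (by positivity) hs ?_
  change m ^ s ≤ 2 * (2 ^ s * K) * tauWeight τ q Γ y
  linarith

end IsTauFunction

section PhaseSpace

variable {n : ℕ} {κ γ q : ℝ} {A V : E n → ℝ}

/-- The function `M(x, ξ) = q + V(x) + A(ξ)` whose powers are the coefficients of `gMet`. -/
def phaseWeight (q : ℝ) (A V : E n → ℝ) (X : E n × E n) : ℝ :=
  q + V X.1 + A X.2

theorem phaseWeight_pos (hq : 0 < q) (hA : IsTauFunction γ q A) (hV : IsTauFunction κ q V)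
    (X : E n × E n) : 0 < phaseWeight q A V X := by
  unfold phaseWeight
  linarith [hV.quarter_lt X.1, hA.quarter_lt X.2]

theorem exists_phaseWeight_le_mul (hκ : 0 < κ) (hγ : 0 < γ) (hq : 0 < q)
    (hA : IsTauFunction γ q A) (hV : IsTauFunction κ q V) :
    ∃ ε > 0, ∃ D > 0, ∀ X Y : E n × E n, gMet κ γ q A V X (X - Y) ≤ ε →
      phaseWeight q A V X ≤ D * phaseWeight q A V Y := by
  obtain ⟨ε₁, hε₁, D₁, hD₁, hV_le⟩ := hV.exists_le_mul_of_sq_mul_rpow_neg_le hκ hq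
  obtain ⟨ε₂, hε₂, D₂, -, hA_le⟩ := hA.exists_le_mul_of_sq_mul_rpow_neg_le hγ hq
  refine ⟨min ε₁ ε₂, lt_min hε₁ hε₂, max D₁ D₂, lt_max_of_lt_left hD₁, fun X Y hXY ↦ ?_⟩
  have hMX := phaseWeight_pos hq hA hV X
  have hVY := hV.quarter_lt Y.1
  have hAY := hA.quarter_lt Y.2
  have hMX_def : phaseWeight q A V X = (q / 2 + V X.1) + (q / 2 + A X.2) := by
    unfold phaseWeight; ring
  have hMY_def : phaseWeight q A V Y = (q / 2 + V Y.1) + (q / 2 + A Y.2) := by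
    unfold phaseWeight; ring
  change ‖X.1 - Y.1‖ ^ 2 * phaseWeight q A V X ^ (-(1 / κ)) +
    ‖X.2 - Y.2‖ ^ 2 * phaseWeight q A V X ^ (-(1 / γ)) ≤ min ε₁ ε₂ at hXY
  rcases le_total (A X.2) (V X.1) with hAV | hVA
  · have hnear := (le_add_of_nonneg_right (by positivity)).trans (hXY.trans (min_le_left _ _))
    calc phaseWeight q A V X ≤ D₁ * (q / 2 + V Y.1) :=
          hV_le X.1 Y.1 _ hMX (by linarith) hnear
      _ ≤ max D₁ D₂ * phaseWeight q A V Y := by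
          gcongr
          exacts [by linarith, le_max_left _ _, by linarith]
  · have hnear := (le_add_of_nonneg_left (by positivity)).trans (hXY.trans (min_le_right _ _))
    calc phaseWeight q A V X ≤ D₂ * (q / 2 + A Y.2) :=
          hA_le X.2 Y.2 _ hMX (by linarith) hnear
      _ ≤ max D₁ D₂ * phaseWeight q A V Y := by
          gcongr
          exacts [by linarith, le_max_right _ _, by linarith]

theorem gMet_nonneg {X : E n × E n} (hX : 0 ≤ phaseWeight q A V X) (T : E n × E n) :
    0 ≤ gMet κ γ q A V X T :=
  add_nonneg (mul_nonneg (sq_nonneg _) (Real.rpow_nonneg hX _))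
    (mul_nonneg (sq_nonneg _) (Real.rpow_nonneg hX _))

theorem gMet_le_of_phaseWeight_le (hκ : 0 ≤ κ) (hγ : 0 ≤ γ) {D : ℝ} (hD : 0 < D)
    {X Y : E n × E n} (hX : 0 < phaseWeight q A V X) (hY : 0 ≤ phaseWeight q A V Y)
    (hXY : phaseWeight q A V X ≤ D * phaseWeight q A V Y) (T : E n × E n) :
    gMet κ γ q A V Y T ≤ max (D ^ (1 / κ)) (D ^ (1 / γ)) * gMet κ γ q A V X T := by
  have hcoeff {p : ℝ} (hp : 0 ≤ p) (hpD : D ^ p ≤ max (D ^ (1 / κ)) (D ^ (1 / γ))) :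
      phaseWeight q A V Y ^ (-p) ≤
        max (D ^ (1 / κ)) (D ^ (1 / γ)) * phaseWeight q A V X ^ (-p) :=
    (rpow_neg_le_mul_rpow_neg hX hY hD hp hXY).trans (by gcongr)
  calc gMet κ γ q A V Y T
      = ‖T.1‖ ^ 2 * phaseWeight q A V Y ^ (-(1 / κ)) +
          ‖T.2‖ ^ 2 * phaseWeight q A V Y ^ (-(1 / γ)) := rfl
    _ ≤ ‖T.1‖ ^ 2 * (max (D ^ (1 / κ)) (D ^ (1 / γ)) * phaseWeight q A V X ^ (-(1 / κ))) +
          ‖T.2‖ ^ 2 * (max (D ^ (1 / κ)) (D ^ (1 / γ)) * phaseWeight q A V X ^ (-(1 / γ))) := by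
        gcongr
        exacts [hcoeff (by positivity) (le_max_left _ _), hcoeff (by positivity) (le_max_right _ _)]
    _ = max (D ^ (1 / κ)) (D ^ (1 / γ)) * gMet κ γ q A V X T := by
        unfold gMet phaseWeight; ring

end PhaseSpace

theorem statement1_general {n : ℕ} (κ γ q : ℝ) (hκ : 0 < κ) (hγ : 0 < γ) (hq : 0 < q)
    (A V : E n → ℝ) (hA : IsTauFunction γ q A) (hV : IsTauFunction κ q V) :
    ∃ C : ℝ, 1 ≤ C ∧ ∀ X Y : E n × E n,
      gMet κ γ q A V X (X - Y) ≤ C⁻¹ →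
        ∀ T : E n × E n, gMet κ γ q A V Y T ≤ C * gMet κ γ q A V X T := by
  obtain ⟨ε, hε, D, hD, hM_le⟩ := exists_phaseWeight_le_mul hκ hγ hq hA hV
  have hpos := phaseWeight_pos hq hA hV
  set C₀ := max (D ^ (1 / κ)) (D ^ (1 / γ))
  refine ⟨max 1 (max ε⁻¹ C₀), le_max_left _ _, fun X Y hXY T ↦ ?_⟩
  have hnear : gMet κ γ q A V X (X - Y) ≤ ε :=
    hXY.trans (inv_le_of_inv_le₀ hε ((le_max_left _ _).trans (le_max_right _ _)))
  calc gMet κ γ q A V Y T ≤ C₀ * gMet κ γ q A V X T :=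
        gMet_le_of_phaseWeight_le hκ.le hγ.le hD (hpos X) (hpos Y).le (hM_le X Y hnear) T
    _ ≤ max 1 (max ε⁻¹ C₀) * gMet κ γ q A V X T :=
        mul_le_mul_of_nonneg_right ((le_max_right _ _).trans (le_max_right _ _))
          (gMet_nonneg (hpos X).le T)

/-- the metric g^{(A,V)} is slowly varying (continuous). -/
theorem statement1 {n : ℕ} (hn : 1 ≤ n) (κ γ q : ℝ) (hκ : 0 < κ) (hγ : 0 < γ) (hq : 0 < q)
    (A V : E n → ℝ) (hA : IsTauFunction γ q A) (hV : IsTauFunction κ q V)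
    (hM : ∀ x ξ : E n, 1 ≤ q + V x + A ξ) :
    ∃ C : ℝ, 1 ≤ C ∧ ∀ X Y : E n × E n,
      gMet κ γ q A V X (X - Y) ≤ C⁻¹ →
        ∀ T : E n × E n, gMet κ γ q A V Y T ≤ C * gMet κ γ q A V X T :=
  statement1_general κ γ q hκ hγ hq A V hA hV
end
end

section
/- Let A, V, q, M be as in the context. Then there exist a constant C > 0 and an integer N ≥ 1 such that for all x, y, ξ, η ∈ ℝⁿ: (q+V(y)+A(η))^{1/(2κ)} ≤ C·(q+V(x)+A(ξ))^{1/(2κ)}·(2 + (q+V(x)+A(ξ))^{1/(2γ)}·|x−y| + (q+V(x)+A(ξ))^{1/(2κ)}·|ξ−η|)^N. -/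
open MeasureTheory RealInnerProductSpace
noncomputable section

/-!
By the triangle inequality through a point of the sphere `‖z‖ = R`, the root
`(q / 2 + Γ) ^ (1 / (2 * τ))` of a `τ`-function is Lipschitz up to an additive constant on the whole
space. Being also bounded below by a positive constant, it is temperate, i.e. it grows at most
polynomially, relative to its value at any point, in the distance to that point. Temperateness
survives real powers and sums, so it passes to `q / 2 + V`, to `q / 2 + A`, to
`M = (q / 2 + V) + (q / 2 + A)`, and to `M ^ (1 / (2 * κ))`. Finally, `M ≥ 1` lets the weighted
distance dominate the unweighted one.
-/

/-- A temperate function: its values at two points are comparable up to a polynomial in their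
distance. This is Hörmander's condition on weight functions, stated on a pseudometric space and
meant for nonnegative `f`. -/
def IsTemperate {X : Type*} [PseudoMetricSpace X] (f : X → ℝ) : Prop :=
  ∃ C > (0 : ℝ), ∃ N : ℕ, ∀ x y, f y ≤ C * f x * (1 + dist x y) ^ N

namespace IsTemperate

variable {X Y : Type*} [PseudoMetricSpace X] [PseudoMetricSpace Y] {f g : X → ℝ}

theorem of_dist_le_add_mul_dist {c B : ℝ} {L : NNReal} (hc : 0 < c) (hB : 0 ≤ B)
    (hcf : ∀ x, c ≤ f x) (hf : ∀ x y, dist (f x) (f y) ≤ B + L * dist x y) : IsTemperate f := by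
  refine ⟨1 + (B + L) / c, by positivity, 1, fun x y ↦ ?_⟩
  have hfx : 0 < f x := hc.trans_le (hcf x)
  have hsub : f y - f x ≤ B + L * dist x y := by
    rw [dist_comm x y]
    exact (le_abs_self _).trans (hf y x)
  have hone : 1 ≤ f x / c := (one_le_div hc).2 (hcf x)
  calc f y ≤ f x + (B + L * dist x y) := by linarith
    _ ≤ f x * (1 + dist x y) + (B + L) * (1 + dist x y) := by
        have : 0 ≤ f x * dist x y + B * dist x y + L := by positivity
        linarith
    _ ≤ f x * (1 + dist x y) + (B + L) * (1 + dist x y) * (f x / c) :=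
        add_le_add_right (le_mul_of_one_le_right (by positivity) hone) _
    _ = (1 + (B + L) / c) * f x * (1 + dist x y) ^ 1 := by ring

theorem rpow (hf : IsTemperate f) (hf₀ : ∀ x, 0 ≤ f x) {s : ℝ} (hs : 0 ≤ s) :
    IsTemperate fun x ↦ f x ^ s := by
  obtain ⟨C, hC, N, h⟩ := hf
  refine ⟨C ^ s, by positivity, ⌈N * s⌉₊, fun x y ↦ ?_⟩
  have hfx := hf₀ x
  have hone : 1 ≤ 1 + dist x y := le_add_of_nonneg_right dist_nonneg
  calc f y ^ s ≤ (C * f x * (1 + dist x y) ^ N) ^ s := Real.rpow_le_rpow (hf₀ y) (h x y) hs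
    _ = C ^ s * f x ^ s * (1 + dist x y) ^ (N * s) := by
        rw [Real.mul_rpow (by positivity) (by positivity), Real.mul_rpow hC.le hfx,
          Real.rpow_natCast_mul (by positivity)]
    _ ≤ C ^ s * f x ^ s * (1 + dist x y) ^ ⌈N * s⌉₊ := by
        rw [← Real.rpow_natCast _ ⌈N * s⌉₊]
        gcongr
        exact Nat.le_ceil _

theorem add (hf : IsTemperate f) (hg : IsTemperate g) (hf₀ : ∀ x, 0 ≤ f x)
    (hg₀ : ∀ x, 0 ≤ g x) : IsTemperate fun x ↦ f x + g x := by
  obtain ⟨C, hC, N, hf⟩ := hf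
  obtain ⟨C', hC', N', hg⟩ := hg
  refine ⟨C + C', by positivity, N + N', fun x y ↦ ?_⟩
  have hfx := hf₀ x
  have hgx := hg₀ x
  have hone : 1 ≤ 1 + dist x y := le_add_of_nonneg_right dist_nonneg
  calc f y + g y ≤ C * f x * (1 + dist x y) ^ N + C' * g x * (1 + dist x y) ^ N' :=
        add_le_add (hf x y) (hg x y)
    _ ≤ C * (f x + g x) * (1 + dist x y) ^ (N + N')
          + C' * (f x + g x) * (1 + dist x y) ^ (N + N') := by
        gcongr <;> linarith
    _ = (C + C') * (f x + g x) * (1 + dist x y) ^ (N + N') := by ring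

theorem comp_lipschitzWith (hf : IsTemperate f) (hf₀ : ∀ x, 0 ≤ f x) {φ : Y → X} {K : NNReal}
    (hφ : LipschitzWith K φ) : IsTemperate fun y ↦ f (φ y) := by
  obtain ⟨C, hC, N, h⟩ := hf
  refine ⟨C * (1 + K) ^ N, by positivity, N, fun x y ↦ ?_⟩
  have hfx := hf₀ (φ x)
  have hdist : 1 + dist (φ x) (φ y) ≤ (1 + K) * (1 + dist x y) := by
    have := hφ.dist_le_mul x y
    have := K.coe_nonneg
    have : 0 ≤ dist x y := dist_nonneg
    linarith
  calc f (φ y) ≤ C * f (φ x) * (1 + dist (φ x) (φ y)) ^ N := h _ _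
    _ ≤ C * f (φ x) * ((1 + K) * (1 + dist x y)) ^ N := by gcongr
    _ = C * (1 + K) ^ N * f (φ x) * (1 + dist x y) ^ N := by
        rw [mul_pow]
        ring

end IsTemperate

section RadialProjection

variable {F Y : Type*} [SeminormedAddCommGroup F] [NormedSpace ℝ F] [PseudoMetricSpace Y]

theorem exists_norm_eq_and_dist_le {R : ℝ} (hR : 0 ≤ R) {x y : F} (hx : ‖x‖ ≤ R)
    (hy : R < ‖y‖) : ∃ z : F, ‖z‖ = R ∧ dist z y ≤ dist x y := by
  have hy₀ : 0 < ‖y‖ := hR.trans_lt hy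
  refine ⟨(R / ‖y‖) • y, ?_, ?_⟩
  · rw [norm_smul, Real.norm_of_nonneg (by positivity), div_mul_cancel₀ _ hy₀.ne']
  · have hratio : 0 ≤ 1 - R / ‖y‖ := sub_nonneg.2 ((div_le_one hy₀).2 hy.le)
    calc dist ((R / ‖y‖) • y) y = ‖(1 - R / ‖y‖) • y‖ := by
          rw [dist_comm, dist_eq_norm, sub_smul, one_smul]
      _ = ‖y‖ - R := by
          rw [norm_smul, Real.norm_of_nonneg hratio, sub_mul, div_mul_cancel₀ _ hy₀.ne', one_mul]
      _ ≤ ‖y‖ - ‖x‖ := by gcongr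
      _ ≤ dist x y := by
          rw [dist_comm, dist_eq_norm]
          exact norm_sub_norm_le y x

theorem dist_le_add_mul_dist_of_lipschitzOnWith_compl_ball {f : F → Y} {R B : ℝ} {L : NNReal}
    (hR : 0 ≤ R) (hB : ∀ x y, ‖x‖ ≤ R → ‖y‖ ≤ R → dist (f x) (f y) ≤ B)
    (hL : LipschitzOnWith L f {x | R ≤ ‖x‖}) (x y : F) :
    dist (f x) (f y) ≤ B + L * dist x y := by
  wlog hxy : ‖x‖ ≤ ‖y‖ generalizing x y
  · rw [dist_comm (f x), dist_comm x]
    exact this y x (le_of_not_ge hxy)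
  have hB₀ : 0 ≤ B := by simpa using hB 0 0 (by simpa using hR) (by simpa using hR)
  rcases le_or_gt ‖y‖ R with hy | hy
  · exact (hB x y (hxy.trans hy) hy).trans (le_add_of_nonneg_right (by positivity))
  rcases le_or_gt R ‖x‖ with hx | hx
  · exact (hL.dist_le_mul x hx y hy.le).trans (le_add_of_nonneg_left hB₀)
  obtain ⟨z, hz, hzy⟩ := exists_norm_eq_and_dist_le hR hx.le hy
  calc dist (f x) (f y) ≤ dist (f x) (f z) + dist (f z) (f y) := dist_triangle _ _ _
    _ ≤ B + L * dist z y := add_le_add (hB x z hx.le hz.le) (hL.dist_le_mul z hz.ge y hy.le)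
    _ ≤ B + L * dist x y := by gcongr

end RadialProjection

namespace IsTauFunction

variable {n : ℕ} {τ q : ℝ} {Γ : E n → ℝ}

theorem quarter_le_half_add (h : IsTauFunction τ q Γ) (x : E n) : q / 4 ≤ q / 2 + Γ x := by
  linarith [h.2.1 x]

theorem half_add_pos (h : IsTauFunction τ q Γ) (hq : 0 < q) (x : E n) : 0 < q / 2 + Γ x := by
  linarith [h.quarter_le_half_add x]

theorem continuous_root (h : IsTauFunction τ q Γ) (hq : 0 < q) :
    Continuous fun x ↦ (q / 2 + Γ x) ^ (1 / (2 * τ)) :=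
  (h.1.const_add _).rpow_const fun x ↦ .inl (h.half_add_pos hq x).ne'

theorem exists_lipschitzOnWith_root (h : IsTauFunction τ q Γ) :
    ∃ L : NNReal, ∃ R : ℝ, 0 ≤ R ∧
      LipschitzOnWith L (fun x ↦ (q / 2 + Γ x) ^ (1 / (2 * τ))) {x | R ≤ ‖x‖} := by
  obtain ⟨-, -, C₁, hC₁, R, hR, hΓ⟩ := h
  refine ⟨C₁⁻¹.toNNReal, R, hR.le, LipschitzOnWith.of_dist_le_mul fun x hx y hy ↦ ?_⟩
  rw [Real.coe_toNNReal _ (by positivity), dist_eq_norm x y, le_inv_mul_iff₀ hC₁]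
  exact hΓ x y hx hy

theorem isTemperate_root (h : IsTauFunction τ q Γ) (hτ : 0 < τ) (hq : 0 < q) :
    IsTemperate fun x ↦ (q / 2 + Γ x) ^ (1 / (2 * τ)) := by
  obtain ⟨L, R, hR, hL⟩ := h.exists_lipschitzOnWith_root
  have hbdd : Bornology.IsBounded
      ((fun x ↦ (q / 2 + Γ x) ^ (1 / (2 * τ))) '' Metric.closedBall 0 R) :=
    ((isCompact_closedBall 0 R).image (h.continuous_root hq)).isBounded
  refine .of_dist_le_add_mul_dist (c := (q / 4) ^ (1 / (2 * τ))) (by positivity)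
    Metric.diam_nonneg (fun x ↦ ?_) (dist_le_add_mul_dist_of_lipschitzOnWith_compl_ball hR
      (fun x y hx hy ↦ Metric.dist_le_diam_of_mem hbdd ⟨x, by simpa using hx, rfl⟩
        ⟨y, by simpa using hy, rfl⟩) hL)
  gcongr
  exact h.quarter_le_half_add x

theorem isTemperate_half_add (h : IsTauFunction τ q Γ) (hτ : 0 < τ) (hq : 0 < q) :
    IsTemperate fun x ↦ q / 2 + Γ x := by
  have hpos := h.half_add_pos hq
  have hpow : ∀ x, ((q / 2 + Γ x) ^ (1 / (2 * τ))) ^ (2 * τ) = q / 2 + Γ x := fun x ↦ by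
    rw [one_div, Real.rpow_inv_rpow (hpos x).le (by positivity)]
  simpa only [hpow] using (h.isTemperate_root hτ hq).rpow
    (fun x ↦ Real.rpow_nonneg (hpos x).le _) (s := 2 * τ) (by positivity)

theorem isTemperate_add {m : ℕ} {σ : ℝ} {Δ : E m → ℝ} (hΓ : IsTauFunction τ q Γ)
    (hΔ : IsTauFunction σ q Δ) (hτ : 0 < τ) (hσ : 0 < σ) (hq : 0 < q) :
    IsTemperate fun p : E n × E m ↦ q + Γ p.1 + Δ p.2 := by
  have hΓ₀ x := (hΓ.half_add_pos hq x).le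
  have hΔ₀ x := (hΔ.half_add_pos hq x).le
  have hsplit : ∀ p : E n × E m, q + Γ p.1 + Δ p.2 = (q / 2 + Γ p.1) + (q / 2 + Δ p.2) :=
    fun p ↦ by ring
  simp only [hsplit]
  exact ((hΓ.isTemperate_half_add hτ hq).comp_lipschitzWith hΓ₀ .prod_fst).add
    ((hΔ.isTemperate_half_add hσ hq).comp_lipschitzWith hΔ₀ .prod_snd)
    (fun p ↦ hΓ₀ p.1) (fun p ↦ hΔ₀ p.2)

end IsTauFunction

theorem one_add_dist_prod_le {X Y : Type*} [SeminormedAddCommGroup X] [SeminormedAddCommGroup Y]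
    {a b : ℝ} (ha : 1 ≤ a) (hb : 1 ≤ b) (x y : X) (ξ η : Y) :
    1 + dist (x, ξ) (y, η) ≤ 2 + a * ‖x - y‖ + b * ‖ξ - η‖ := by
  have hx : ‖x - y‖ ≤ a * ‖x - y‖ := le_mul_of_one_le_left (norm_nonneg _) ha
  have hξ : ‖ξ - η‖ ≤ b * ‖ξ - η‖ := le_mul_of_one_le_left (norm_nonneg _) hb
  have hmax : dist (x, ξ) (y, η) ≤ ‖x - y‖ + ‖ξ - η‖ := by
    rw [Prod.dist_eq, dist_eq_norm, dist_eq_norm]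
    exact max_le_add_of_nonneg (norm_nonneg _) (norm_nonneg _)
  linarith

/-- the key temperateness inequality for M^{1/(2κ)}. -/
theorem statement4 {n : ℕ} (hn : 1 ≤ n) (κ γ q : ℝ) (hκ : 0 < κ) (hγ : 0 < γ) (hq : 0 < q)
    (A V : E n → ℝ) (hA : IsTauFunction γ q A) (hV : IsTauFunction κ q V)
    (hM : ∀ x ξ : E n, 1 ≤ q + V x + A ξ) :
    ∃ C > (0:ℝ), ∃ N : ℕ, 1 ≤ N ∧ ∀ x y ξ η : E n,
      (q + V y + A η) ^ (1 / (2 * κ)) ≤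
        C * (q + V x + A ξ) ^ (1 / (2 * κ)) *
          (2 + (q + V x + A ξ) ^ (1 / (2 * γ)) * ‖x - y‖ +
            (q + V x + A ξ) ^ (1 / (2 * κ)) * ‖ξ - η‖) ^ N := by
  have hM₀ : ∀ p : E n × E n, 0 ≤ q + V p.1 + A p.2 := fun p ↦ zero_le_one.trans (hM p.1 p.2)
  obtain ⟨C, hC, N, htemp⟩ := (hV.isTemperate_add hA hκ hγ hq).rpow hM₀
    (s := 1 / (2 * κ)) (by positivity)
  refine ⟨C, hC, N + 1, Nat.le_add_left 1 N, fun x y ξ η ↦ ?_⟩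
  have hMx := hM₀ (x, ξ)
  have hdist := one_add_dist_prod_le
    (Real.one_le_rpow (hM x ξ) (z := 1 / (2 * γ)) (by positivity))
    (Real.one_le_rpow (hM x ξ) (z := 1 / (2 * κ)) (by positivity)) x y ξ η
  have hone : 1 ≤ 1 + dist (x, ξ) (y, η) := le_add_of_nonneg_right dist_nonneg
  refine (htemp (x, ξ) (y, η)).trans (mul_le_mul_of_nonneg_left ?_ (by positivity))
  calc (1 + dist (x, ξ) (y, η)) ^ N ≤ (1 + dist (x, ξ) (y, η)) ^ (N + 1) :=
        pow_le_pow_right₀ hone N.le_succ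
    _ ≤ _ := pow_le_pow_left₀ (by positivity) hdist _
end
end

section
/- Let κ>0, q>0, and let V: ℝⁿ → ℝ be a κ-function with parameter q such that q/2+V(x) ≥ 1 for all x ∈ ℝⁿ. Then there exists a constant C > 0 such that for all x, y ∈ ℝⁿ: (q/2+V(y))^{1/(2κ)} ≤ C·(1+|x−y|)·(q/2+V(x))^{1/(2κ)}. -/
open MeasureTheory
noncomputable section

/-!
The function `f = (q/2 + V)^{1/(2κ)}` is Lipschitz off a bounded set on which it is bounded, so it
stays within bounded distance of a globally Lipschitz function, namely any Lipschitz extension of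
its restriction to the complement. Hence `f y ≤ f x + A + K |x - y|`, and since `f x ≥ 1` the
additive error can be absorbed into a multiple of `(1 + |x - y|) f x`.
-/

open Bornology Metric
open scoped NNReal

section PseudoMetricSpace

variable {X : Type*} [PseudoMetricSpace X] {f : X → ℝ} {B : Set X} {K : ℝ≥0} {A : ℝ}

theorem exists_lipschitzWith_dist_le (hB : IsBounded B) (hfB : IsBounded (f '' B))
    (hf : LipschitzOnWith K f Bᶜ) :
    ∃ g : X → ℝ, LipschitzWith K g ∧ ∃ A : ℝ, ∀ x, dist (f x) (g x) ≤ A := by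
  obtain ⟨g, hg, hfg⟩ := hf.extend_real
  have hbounded : IsBounded (f '' B ∪ g '' B) := hfB.union (hg.isBounded_image hB)
  refine ⟨g, hg, diam (f '' B ∪ g '' B), fun x => ?_⟩
  by_cases hx : x ∈ B
  · exact dist_le_diam_of_mem hbounded (.inl ⟨x, hx, rfl⟩) (.inr ⟨x, hx, rfl⟩)
  · rw [hfg hx, dist_self]
    exact diam_nonneg

theorem exists_dist_le_add_mul_dist (hB : IsBounded B) (hfB : IsBounded (f '' B))
    (hf : LipschitzOnWith K f Bᶜ) :
    ∃ A : ℝ, ∀ x y, dist (f x) (f y) ≤ A + K * dist x y := by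
  obtain ⟨g, hg, A, hA⟩ := exists_lipschitzWith_dist_le hB hfB hf
  refine ⟨A + A, fun x y => ?_⟩
  calc dist (f x) (f y)
      ≤ dist (f x) (g x) + dist (g x) (g y) + dist (g y) (f y) := dist_triangle4 ..
    _ ≤ A + K * dist x y + A := by
        gcongr
        · exact hA x
        · exact hg.dist_le_mul x y
        · exact dist_comm (f y) (g y) ▸ hA y
    _ = A + A + K * dist x y := by ring

theorem le_mul_one_add_dist_mul_of_dist_le (hf_one : ∀ x, 1 ≤ f x)
    (hf : ∀ x y, dist (f x) (f y) ≤ A + K * dist x y) (x y : X) :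
    f y ≤ (1 + A + K) * (1 + dist x y) * f x := by
  have hA : 0 ≤ A := by simpa using hf x x
  have hsub : f y - f x ≤ A + K * dist x y :=
    (le_abs_self _).trans (dist_comm x y ▸ hf y x)
  calc f y ≤ f x + (A + K * dist x y) := by linarith
    _ ≤ f x + (A + K * dist x y) * f x := by
        gcongr
        exact le_mul_of_one_le_right (by positivity) (hf_one x)
    _ = (1 + A + K * dist x y) * f x := by ring
    _ ≤ (1 + A + K) * (1 + dist x y) * f x := by
        have hfx : 0 ≤ f x := zero_le_one.trans (hf_one x)
        gcongr
        have hcross : 0 ≤ K + (1 + A) * dist x y := by positivity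
        linarith

theorem exists_le_mul_one_add_dist_mul (hB : IsBounded B) (hfB : BddAbove (f '' B))
    (hf : LipschitzOnWith K f Bᶜ) (hf_one : ∀ x, 1 ≤ f x) :
    ∃ C > 0, ∀ x y, f y ≤ C * (1 + dist x y) * f x := by
  have hbelow : BddBelow (f '' B) := ⟨1, Set.forall_mem_image.2 fun x _ => hf_one x⟩
  obtain ⟨A, hA⟩ := exists_dist_le_add_mul_dist hB (isBounded_of_bddAbove_of_bddBelow hfB hbelow) hf
  refine ⟨1 + |A| + K, by positivity, le_mul_one_add_dist_mul_of_dist_le hf_one fun x y => ?_⟩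
  exact (hA x y).trans (by gcongr; exact le_abs_self A)

theorem lipschitzOnWith_of_mul_abs_sub_le {C₁ : ℝ} {s : Set X} (hC₁ : 0 < C₁)
    (h : ∀ x ∈ s, ∀ y ∈ s, C₁ * |f x - f y| ≤ dist x y) :
    LipschitzOnWith C₁⁻¹.toNNReal f s :=
  .of_dist_le_mul fun x hx y hy => by
    rw [Real.coe_toNNReal _ (inv_nonneg.2 hC₁.le), Real.dist_eq, le_inv_mul_iff₀ hC₁]
    exact h x hx y hy

theorem statement5_general {κ q C₁ : ℝ} (hκ : 0 < κ) (hC₁ : 0 < C₁) {V : X → ℝ}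
    (hB : IsBounded B) (hVB : BddAbove (V '' B)) (hV_one : ∀ x, 1 ≤ q / 2 + V x)
    (hV : ∀ x ∈ Bᶜ, ∀ y ∈ Bᶜ,
      C₁ * |(q / 2 + V x) ^ (1 / (2 * κ)) - (q / 2 + V y) ^ (1 / (2 * κ))| ≤ dist x y) :
    ∃ C > 0, ∀ x y,
      (q / 2 + V y) ^ (1 / (2 * κ)) ≤ C * (1 + dist x y) * (q / 2 + V x) ^ (1 / (2 * κ)) := by
  obtain ⟨M, hM⟩ := hVB
  have hbdd : BddAbove ((fun x => (q / 2 + V x) ^ (1 / (2 * κ))) '' B) := by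
    refine ⟨(q / 2 + M) ^ (1 / (2 * κ)), Set.forall_mem_image.2 fun x hx => ?_⟩
    have hbase : 0 ≤ q / 2 + V x := zero_le_one.trans (hV_one x)
    gcongr
    exact hM ⟨x, hx, rfl⟩
  exact exists_le_mul_one_add_dist_mul hB hbdd (lipschitzOnWith_of_mul_abs_sub_le hC₁ hV)
    fun x => Real.one_le_rpow (hV_one x) (by positivity)

end PseudoMetricSpace

/-- for a κ-function V with q/2 + V ≥ 1, the quantity (q/2+V(y))^{1/(2κ)}
is controlled by C(1+|x−y|)(q/2+V(x))^{1/(2κ)}. -/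
theorem statement5 {n : ℕ} (hn : 1 ≤ n) (κ q : ℝ) (hκ : 0 < κ) (hq : 0 < q)
    (V : E n → ℝ) (hV : IsTauFunction κ q V) (hV1 : ∀ x : E n, 1 ≤ q / 2 + V x) :
    ∃ C > (0:ℝ), ∀ x y : E n,
      (q / 2 + V y) ^ (1 / (2 * κ)) ≤
        C * (1 + ‖x - y‖) * (q / 2 + V x) ^ (1 / (2 * κ)) := by
  obtain ⟨hcont, -, C₁, hC₁, R, -, hLip⟩ := hV
  have hR (x : E n) (hx : x ∈ (closedBall 0 R)ᶜ) : R ≤ ‖x‖ :=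
    le_of_lt (by simpa using hx)
  simp only [← dist_eq_norm] at hLip ⊢
  exact statement5_general hκ hC₁ isBounded_closedBall
    ((isCompact_closedBall 0 R).bddAbove_image hcont.continuousOn) hV1
    fun x hx y hy => hLip x y (hR x hx) (hR y hy)
end
end

section
/- Let A, V, q, M, g be as in the context, and let m ∈ ℝ. For a smooth function a: ℝⁿ×ℝⁿ → ℂ the following two conditions are equivalent: (i) for every k ∈ ℕ there exists C_k > 0 such that for all X ∈ ℝⁿ×ℝⁿ and all directions T₁,…,T_k ∈ ℝⁿ×ℝⁿ, the k-th derivative satisfies |a^{(k)}(X; T₁,…,T_k)| ≤ C_k·M(X)^m·∏_{i=1}^{k} g_X(T_i)^{1/2} (i.e. a belongs to the Hörmander class S(λ_g^{m·2κγ/(κ+γ)}, g), where λ_g(X)^{2κγ/(κ+γ)} = M(X)); (ii) for all multi-indices α, β there exists C_{αβ} > 0 such that |∂_x^β ∂_ξ^α a(x,ξ)| ≤ C_{αβ}·M(x,ξ)^{m−|β|/(2κ)−|α|/(2γ)} for all x,ξ ∈ ℝⁿ (i.e. a belongs to the class Σ^m_{A,V}). -/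
open MeasureTheory
noncomputable section

/-- Iterated directional (partial) derivative of `f` along the list of directions `L`,
the head of the list being applied first (innermost). -/
noncomputable def iterPartial {F : Type*} [NormedAddCommGroup F] [NormedSpace ℝ F] :
    List F → (F → ℂ) → F → ℂ
  | [], f => f
  | v :: vs, f => iterPartial vs fun x => fderiv ℝ f x v

/-- The list of coordinate directions encoded by a multi-index `β`: direction `e i`
repeated `β i` times, for `i = 0, …, n-1`. -/
def mIdxDirs {n : ℕ} {F : Type*} (β : Fin n → ℕ) (e : Fin n → F) : List F :=
  (List.finRange n).foldr (fun i l => List.replicate (β i) (e i) ++ l) []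


/-!
By multilinearity a symbol estimate need only be tested on the vectors of a basis, as soon as the
size of a direction, measured by the metric, dominates each of its coordinates times the size of the
corresponding basis vector. On basis vectors the metric is explicit, and by the symmetry of higher
derivatives only the number of occurrences of each basis vector matters, so these tests are exactly
the multi-index estimates.
-/

section IteratedDerivatives

variable {F : Type*} [NormedAddCommGroup F] [NormedSpace ℝ F] {f : F → ℂ}

lemma iterPartial_append (L L' : List F) (f : F → ℂ) :
    iterPartial (L ++ L') f = iterPartial L' (iterPartial L f) := by
  induction L generalizing f with
  | nil => rfl
  | cons v _ ih => exact ih _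

lemma contDiff_fderiv_apply (hf : ContDiff ℝ (⊤ : ℕ∞) f) (v : F) :
    ContDiff ℝ (⊤ : ℕ∞) fun x => fderiv ℝ f x v :=
  (hf.fderiv_right (by simp)).clm_apply contDiff_const

lemma fderiv_fderiv_apply_comm (hf : ContDiff ℝ 2 f) (v w x : F) :
    fderiv ℝ (fun y => fderiv ℝ f y v) x w = fderiv ℝ (fun y => fderiv ℝ f y w) x v := by
  have hdiff : DifferentiableAt ℝ (fderiv ℝ f) x :=
    (hf.fderiv_right (m := 1) (by norm_num)).differentiable (by simp) x
  have hsymm : IsSymmSndFDerivAt ℝ f x := hf.contDiffAt.isSymmSndFDerivAt (by simp)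
  have apply_eq (u z : F) :
      fderiv ℝ (fun y => fderiv ℝ f y u) x z = fderiv ℝ (fderiv ℝ f) x z u := by
    simp [fderiv_clm_apply hdiff (differentiableAt_const u)]
  rw [apply_eq, apply_eq, hsymm.eq]

lemma iterPartial_perm {L L' : List F} (hL : L.Perm L') (hf : ContDiff ℝ (⊤ : ℕ∞) f) :
    iterPartial L f = iterPartial L' f := by
  induction hL generalizing f with
  | nil => rfl
  | cons v _ ih => exact ih (contDiff_fderiv_apply hf v)
  | swap v w L =>
    have hcomm := fderiv_fderiv_apply_comm (contDiff_infty.1 hf 2) w v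
    simp only [iterPartial, hcomm]
  | trans _ _ ih ih' => exact (ih hf).trans (ih' hf)

lemma iteratedFDeriv_apply_eq_iterPartial (hf : ContDiff ℝ (⊤ : ℕ∞) f) {k : ℕ} (x : F)
    (T : Fin k → F) : iteratedFDeriv ℝ k f x T = iterPartial (List.ofFn T) f x := by
  induction k generalizing x with
  | zero => simp [iterPartial]
  | succ k ih =>
    have hdiff : DifferentiableAt ℝ (iteratedFDeriv ℝ k f) x :=
      hf.differentiable_iteratedFDeriv (by exact_mod_cast WithTop.coe_lt_top k) x
    have hperm : (List.ofFn T).Perm (List.ofFn (Fin.tail T) ++ [T 0]) := by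
      rw [List.ofFn_succ]
      exact (List.perm_append_singleton _ _).symm
    calc iteratedFDeriv ℝ (k + 1) f x T
        = fderiv ℝ (fun y => iteratedFDeriv ℝ k f y (Fin.tail T)) x (T 0) := by
          rw [iteratedFDeriv_succ_apply_left,
            ← fderiv_continuousMultilinear_apply_const_apply hdiff]
      _ = fderiv ℝ (iterPartial (List.ofFn (Fin.tail T)) f) x (T 0) := by simp only [ih]
      _ = iterPartial (List.ofFn T) f x := by
          rw [iterPartial_perm hperm hf, iterPartial_append]
          rfl

end IteratedDerivatives

section MultiIndices

variable {n p : ℕ} {D D' : Type*}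

lemma mIdxDirs_eq_flatMap (β : Fin n → ℕ) (e : Fin n → D) :
    mIdxDirs β e = (List.finRange n).flatMap fun i => List.replicate (β i) (e i) := by
  simp [mIdxDirs, List.flatMap_def]

lemma map_mIdxDirs (h : D → D') (β : Fin n → ℕ) (e : Fin n → D) :
    (mIdxDirs β e).map h = mIdxDirs β (h ∘ e) := by
  simp [mIdxDirs_eq_flatMap, List.map_flatMap]

lemma prod_mIdxDirs_const {R : Type*} [CommMonoid R] (β : Fin n → ℕ) (r : R) :
    (mIdxDirs β fun _ => r).prod = r ^ ∑ i, β i := by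
  rw [← Finset.prod_pow_eq_pow_sum, ← List.prod_ofFn, List.ofFn_eq_map]
  simp [mIdxDirs_eq_flatMap, List.flatMap_def, List.prod_flatten, Function.comp_def]

-- Counting in multisets, because the `BEq` instance that `List.count` finds on a sum type is not
-- known to be lawful.
lemma count_mIdxDirs [DecidableEq D] (β : Fin n → ℕ) (e : Fin n → D) (d : D) :
    (mIdxDirs β e : Multiset D).count d = ∑ i, if e i = d then β i else 0 := by
  rw [← List.sum_ofFn, List.ofFn_eq_map]
  simp [mIdxDirs_eq_flatMap, List.count_flatMap, List.count_replicate, Function.comp_def]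

lemma exists_mIdxDirs_append_perm (l : List (Fin n ⊕ Fin p)) :
    ∃ (α : Fin p → ℕ) (β : Fin n → ℕ), (mIdxDirs α Sum.inr ++ mIdxDirs β Sum.inl).Perm l := by
  refine ⟨fun i => (Multiset.ofList l).count (Sum.inr i),
    fun i => (Multiset.ofList l).count (Sum.inl i), ?_⟩
  rw [← Multiset.coe_eq_coe, ← Multiset.coe_add, Multiset.ext]
  rintro (i | i) <;> simp only [Multiset.count_add, count_mIdxDirs] <;> simp

end MultiIndices

section SymbolEstimates

variable {F ι : Type*} [NormedAddCommGroup F] [NormedSpace ℝ F] {μ : F → ℝ} {N : F → F → ℝ}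
  {a : F → ℂ}

/-- The estimates defining the Hörmander class `S(μ, g)`, where `N X T` is the length `g_X(T)^{1/2}`
of the direction `T` at the point `X`. -/
def SymbolEstimates (μ : F → ℝ) (N : F → F → ℝ) (a : F → ℂ) : Prop :=
  ∀ k : ℕ, ∃ C > (0 : ℝ), ∀ (X : F) (T : Fin k → F),
    ‖iteratedFDeriv ℝ k a X T‖ ≤ C * μ X * ∏ i, N X (T i)

/-- The symbol estimates along the vectors of a family `e` only, for the iterated directional
derivatives of `a`. -/
def DirectionalEstimates (e : ι → F) (μ : F → ℝ) (N : F → F → ℝ) (a : F → ℂ) : Prop :=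
  ∀ l : List ι, ∃ C > (0 : ℝ), ∀ X : F,
    ‖iterPartial (l.map e) a X‖ ≤ C * μ X * (l.map fun s => N X (e s)).prod

lemma SymbolEstimates.directionalEstimates (h : SymbolEstimates μ N a)
    (ha : ContDiff ℝ (⊤ : ℕ∞) a) (e : ι → F) : DirectionalEstimates e μ N a := by
  intro l
  obtain ⟨C, hC, bound⟩ := h l.length
  refine ⟨C, hC, fun X => ?_⟩
  have hl := bound X fun j => e (l.get j)
  rwa [iteratedFDeriv_apply_eq_iterPartial ha, ← List.prod_ofFn,
    ← Function.comp_def e, ← List.map_ofFn, ← Function.comp_def (fun s => N X (e s)),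
    ← List.map_ofFn, List.ofFn_get] at hl

lemma norm_multilinearMap_le_of_basis {J 𝕜 W Z : Type*} [Fintype J] [DecidableEq J] [Fintype ι]
    [NormedField 𝕜] [AddCommGroup W] [Module 𝕜 W] [SeminormedAddCommGroup Z] [NormedSpace 𝕜 Z]
    (f : MultilinearMap 𝕜 (fun _ : J => W) Z) (e : Module.Basis ι 𝕜 W) {ν : W → ℝ}
    (hν : ∀ s, 0 ≤ ν (e s)) (hcoord : ∀ T s, ‖e.repr T s‖ * ν (e s) ≤ ν T)
    {C : (J → ι) → ℝ} (hC : ∀ r, 0 ≤ C r)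
    (hf : ∀ r, ‖f fun j => e (r j)‖ ≤ C r * ∏ j, ν (e (r j))) (T : J → W) :
    ‖f T‖ ≤ (∑ r, C r) * ∏ j, ν (T j) := by
  have expansion : f T = ∑ r : J → ι, (∏ j, e.repr (T j) (r j)) • f fun j => e (r j) := by
    conv_lhs => rw [← funext fun j => e.sum_repr (T j), f.map_sum]
    simp only [f.map_smul_univ]
  have term_le (r : J → ι) :
      ‖(∏ j, e.repr (T j) (r j)) • f fun j => e (r j)‖ ≤ C r * ∏ j, ν (T j) := calc
    _ ≤ (∏ j, ‖e.repr (T j) (r j)‖) * (C r * ∏ j, ν (e (r j))) := by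
      rw [norm_smul, norm_prod]
      gcongr
      exact hf r
    _ = C r * ∏ j, ‖e.repr (T j) (r j)‖ * ν (e (r j)) := by
      rw [Finset.prod_mul_distrib]
      ring
    _ ≤ C r * ∏ j, ν (T j) := by
      gcongr with j
      · exact hC r
      · exact fun j _ => mul_nonneg (norm_nonneg _) (hν _)
      · exact hcoord _ _
  calc ‖f T‖ ≤ ∑ r, C r * ∏ j, ν (T j) := by
        rw [expansion]
        exact norm_sum_le_of_le _ fun r _ => term_le r
    _ = (∑ r, C r) * ∏ j, ν (T j) := (Finset.sum_mul ..).symm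

lemma DirectionalEstimates.symbolEstimates [Finite ι] {e : Module.Basis ι ℝ F}
    (h : DirectionalEstimates e μ N a) (ha : ContDiff ℝ (⊤ : ℕ∞) a) (hμ : ∀ X, 0 ≤ μ X)
    (hN : ∀ X T, 0 ≤ N X T) (hcoord : ∀ X T s, ‖e.repr T s‖ * N X (e s) ≤ N X T) :
    SymbolEstimates μ N a := by
  intro k
  cases nonempty_fintype ι
  choose C hC bound using h
  have hsum : 0 ≤ ∑ r : Fin k → ι, C (List.ofFn r) := Finset.sum_nonneg fun r _ => (hC _).le
  refine ⟨∑ r : Fin k → ι, C (List.ofFn r) + 1, by positivity, fun X T => ?_⟩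
  have basis_bound (r : Fin k → ι) : ‖iteratedFDeriv ℝ k a X fun j => e (r j)‖ ≤
      C (List.ofFn r) * μ X * ∏ j, N X (e (r j)) := by
    simpa [iteratedFDeriv_apply_eq_iterPartial ha, List.map_ofFn, List.prod_ofFn,
      Function.comp_def] using bound (List.ofFn r) X
  have hT := norm_multilinearMap_le_of_basis (iteratedFDeriv ℝ k a X).toMultilinearMap e
    (fun s => hN X (e s)) (hcoord X) (fun r => mul_nonneg (hC (List.ofFn r)).le (hμ X))
    basis_bound T
  rw [← Finset.sum_mul] at hT
  refine hT.trans ?_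
  gcongr
  · exact Finset.prod_nonneg fun j _ => hN X (T j)
  · exact hμ X
  · linarith

lemma directionalEstimates_sum_iff {n p : ℕ} {e : Fin n ⊕ Fin p → F}
    (ha : ContDiff ℝ (⊤ : ℕ∞) a) :
    DirectionalEstimates e μ N a ↔ ∀ (α : Fin p → ℕ) (β : Fin n → ℕ), ∃ C > (0 : ℝ), ∀ X : F,
      ‖iterPartial (mIdxDirs α (e ∘ Sum.inr) ++ mIdxDirs β (e ∘ Sum.inl)) a X‖ ≤
        C * μ X * ((mIdxDirs α fun i => N X (e (Sum.inr i))).prod *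
          (mIdxDirs β fun i => N X (e (Sum.inl i))).prod) := by
  constructor
  · intro h α β
    obtain ⟨C, hC, bound⟩ := h (mIdxDirs α Sum.inr ++ mIdxDirs β Sum.inl)
    refine ⟨C, hC, fun X => ?_⟩
    simpa [map_mIdxDirs, Function.comp_def] using bound X
  · intro h l
    obtain ⟨α, β, hl⟩ := exists_mIdxDirs_append_perm l
    obtain ⟨C, hC, bound⟩ := h α β
    refine ⟨C, hC, fun X => ?_⟩
    rw [← iterPartial_perm (hl.map e) ha, ← (hl.map fun s => N X (e s)).prod_eq]
    simpa [map_mIdxDirs, Function.comp_def] using bound X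

end SymbolEstimates

section WeightedProductNorm

variable {F G : Type*} [NormedAddCommGroup F] [NormedAddCommGroup G]

/-- The Euclidean length of `(s t, r τ)`. With `s` and `r` depending on the base point, this is the
length of `(t, τ)` for a metric `s² |t|² + r² |τ|²` of Beals–Fefferman type. -/
def weightedProdNorm {F G : Type*} [Norm F] [Norm G] (s r : ℝ) (T : F × G) : ℝ :=
  √((s * ‖T.1‖) ^ 2 + (r * ‖T.2‖) ^ 2)

lemma weightedProdNorm_zero_right {s : ℝ} (hs : 0 ≤ s) (r : ℝ) (t : F) :
    weightedProdNorm s r (t, (0 : G)) = s * ‖t‖ := by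
  simp [weightedProdNorm, Real.sqrt_sq (mul_nonneg hs (norm_nonneg t))]

lemma weightedProdNorm_zero_left (s : ℝ) {r : ℝ} (hr : 0 ≤ r) (t : G) :
    weightedProdNorm s r ((0 : F), t) = r * ‖t‖ := by
  simp [weightedProdNorm, Real.sqrt_sq (mul_nonneg hr (norm_nonneg t))]

lemma mul_norm_fst_le_weightedProdNorm (s r : ℝ) (T : F × G) :
    s * ‖T.1‖ ≤ weightedProdNorm s r T :=
  Real.le_sqrt_of_sq_le (le_add_of_nonneg_right (sq_nonneg _))

lemma mul_norm_snd_le_weightedProdNorm (s r : ℝ) (T : F × G) :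
    r * ‖T.2‖ ≤ weightedProdNorm s r T :=
  Real.le_sqrt_of_sq_le (le_add_of_nonneg_left (sq_nonneg _))

variable [InnerProductSpace ℝ F] [InnerProductSpace ℝ G] {n p : ℕ}

lemma norm_orthonormalBasis_repr_le {ι : Type*} [Fintype ι] (b : OrthonormalBasis ι ℝ F)
    (t : F) (i : ι) :
    ‖b.repr t i‖ ≤ ‖t‖ :=
  (PiLp.norm_apply_le _ i).trans_eq (b.repr.norm_map t)

lemma norm_repr_mul_weightedProdNorm_le (b : OrthonormalBasis (Fin n) ℝ F)
    (c : OrthonormalBasis (Fin p) ℝ G) {s r : ℝ} (hs : 0 ≤ s) (hr : 0 ≤ r) (T : F × G)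
    (i : Fin n ⊕ Fin p) :
    ‖(b.toBasis.prod c.toBasis).repr T i‖ *
      weightedProdNorm s r (b.toBasis.prod c.toBasis i) ≤ weightedProdNorm s r T := by
  rcases i with i | i
  · calc _ = s * ‖b.repr T.1 i‖ := by
          simp [Module.Basis.prod_apply, weightedProdNorm_zero_right hs, mul_comm]
      _ ≤ s * ‖T.1‖ := by gcongr; exact norm_orthonormalBasis_repr_le b T.1 i
      _ ≤ _ := mul_norm_fst_le_weightedProdNorm s r T
  · calc _ = r * ‖c.repr T.2 i‖ := by
          simp [Module.Basis.prod_apply, weightedProdNorm_zero_left s hr, mul_comm]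
      _ ≤ r * ‖T.2‖ := by gcongr; exact norm_orthonormalBasis_repr_le c T.2 i
      _ ≤ _ := mul_norm_snd_le_weightedProdNorm s r T

theorem statement7_general (b : OrthonormalBasis (Fin n) ℝ F) (c : OrthonormalBasis (Fin p) ℝ G)
    {μ φ ψ : F × G → ℝ} (hμ : ∀ X, 0 ≤ μ X) (hφ : ∀ X, 0 ≤ φ X) (hψ : ∀ X, 0 ≤ ψ X)
    {a : F × G → ℂ} (ha : ContDiff ℝ (⊤ : ℕ∞) a) :
    SymbolEstimates μ (fun X => weightedProdNorm (φ X) (ψ X)) a ↔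
      ∀ (α : Fin p → ℕ) (β : Fin n → ℕ), ∃ C > (0 : ℝ), ∀ X : F × G,
        ‖iterPartial (mIdxDirs α (fun i => ((0 : F), c i)) ++
            mIdxDirs β (fun i => (b i, (0 : G)))) a X‖ ≤
          C * μ X * (ψ X ^ (∑ i, α i) * φ X ^ (∑ i, β i)) := by
  have hbasis : SymbolEstimates μ (fun X => weightedProdNorm (φ X) (ψ X)) a ↔
      DirectionalEstimates (b.toBasis.prod c.toBasis) μ
        (fun X => weightedProdNorm (φ X) (ψ X)) a :=
    ⟨fun h => h.directionalEstimates ha _, fun h => h.symbolEstimates ha hμ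
      (fun _ _ => Real.sqrt_nonneg _)
      fun X => norm_repr_mul_weightedProdNorm_le b c (hφ X) (hψ X)⟩
  rw [hbasis, directionalEstimates_sum_iff ha]
  simp [Module.Basis.prod_apply, Function.comp_def, weightedProdNorm_zero_right,
    weightedProdNorm_zero_left, hφ, hψ, prod_mIdxDirs_const]

end WeightedProductNorm

lemma rpow_neg_one_div_two_mul_sq {M : ℝ} (hM : 0 ≤ M) (κ : ℝ) :
    (M ^ (-(1 / (2 * κ)))) ^ 2 = M ^ (-(1 / κ)) := by
  rw [← Real.rpow_mul_natCast hM]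
  congr 1
  rw [← div_div]
  push_cast
  ring

lemma gMet_rpow_half {n : ℕ} (κ γ q : ℝ) (A V : E n → ℝ) {X : E n × E n}
    (hM : 0 ≤ q + V X.1 + A X.2) (T : E n × E n) :
    gMet κ γ q A V X T ^ ((1 : ℝ) / 2) =
      weightedProdNorm ((q + V X.1 + A X.2) ^ (-(1 / (2 * κ))))
        ((q + V X.1 + A X.2) ^ (-(1 / (2 * γ)))) T := by
  rw [← Real.sqrt_eq_rpow, gMet, weightedProdNorm, mul_pow, mul_pow,
    rpow_neg_one_div_two_mul_sq hM, rpow_neg_one_div_two_mul_sq hM, mul_comm (‖T.1‖ ^ 2),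
    mul_comm (‖T.2‖ ^ 2)]

lemma rpow_mul_rpow_pow_mul_rpow_pow {M : ℝ} (hM : 0 < M) (m κ γ : ℝ) (j k : ℕ) :
    M ^ m * ((M ^ (-(1 / (2 * γ)))) ^ k * (M ^ (-(1 / (2 * κ)))) ^ j) =
      M ^ (m - j / (2 * κ) - k / (2 * γ)) := by
  rw [← Real.rpow_mul_natCast hM.le, ← Real.rpow_mul_natCast hM.le, ← Real.rpow_add hM,
    ← Real.rpow_add hM]
  congr 1
  ring

/-- for a smooth symbol a on ℝⁿ×ℝⁿ, the Weyl–Hörmander estimates of the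
class S(λ_g^{m·2κγ/(κ+γ)}, g) (with λ_g^{2κγ/(κ+γ)} = M = q+V+A), phrased via iterated
Fréchet derivatives, are equivalent to the multi-index estimates defining Σ^m_{A,V}:
|∂_x^β ∂_ξ^α a(x,ξ)| ≤ C_{αβ} M(x,ξ)^{m − |β|/(2κ) − |α|/(2γ)}. -/
theorem statement7 {n : ℕ} (hn : 1 ≤ n) (κ γ q m : ℝ) (hκ : 0 < κ) (hγ : 0 < γ)
    (hq : 0 < q) (A V : E n → ℝ) (hA : IsTauFunction γ q A) (hV : IsTauFunction κ q V)
    (hM : ∀ x ξ : E n, 1 ≤ q + V x + A ξ)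
    (a : E n × E n → ℂ) (ha : ContDiff ℝ (⊤ : ℕ∞) a) :
    (∀ k : ℕ, ∃ C > (0:ℝ), ∀ (X : E n × E n) (T : Fin k → E n × E n),
        ‖iteratedFDeriv ℝ k a X T‖ ≤
          C * (q + V X.1 + A X.2) ^ m *
            ∏ i, gMet κ γ q A V X (T i) ^ ((1:ℝ) / 2)) ↔
    (∀ α β : Fin n → ℕ, ∃ C > (0:ℝ), ∀ x ξ : E n,
        ‖iterPartial
            (mIdxDirs α (fun i => ((0 : E n), EuclideanSpace.single i (1:ℝ))) ++
              mIdxDirs β (fun i => (EuclideanSpace.single i (1:ℝ), (0 : E n))))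
            a (x, ξ)‖ ≤
          C * (q + V x + A ξ) ^
              (m - (∑ i, (β i : ℝ)) / (2 * κ) - (∑ i, (α i : ℝ)) / (2 * γ))) := by
  have hpos (X : E n × E n) : 0 < q + V X.1 + A X.2 := zero_lt_one.trans_le (hM X.1 X.2)
  have hpow (p : ℝ) (X : E n × E n) : 0 ≤ (q + V X.1 + A X.2) ^ p := Real.rpow_nonneg (hpos X).le p
  have general := statement7_general (EuclideanSpace.basisFun (Fin n) ℝ)
    (EuclideanSpace.basisFun (Fin n) ℝ) (hpow m) (hpow (-(1 / (2 * κ)))) (hpow (-(1 / (2 * γ)))) ha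
  simpa only [SymbolEstimates, ← gMet_rpow_half κ γ q A V (hpos _).le, mul_assoc,
    rpow_mul_rpow_pow_mul_rpow_pow (hpos _), EuclideanSpace.basisFun_apply, Prod.forall,
    Nat.cast_sum] using general
end
end

section
/- Let n ≥ 1, κ, γ > 0, let A, V: ℝⁿ → ℝ be continuous, and let q > 0 be such that q+V(x)+A(ξ) ≥ 1 for all x, ξ ∈ ℝⁿ. Assume condition (C*): there exist constants C₁, C₂ > 0 such that A(ξ) ≥ C₁·|ξ|^{2γ} for all |ξ| ≥ C₂ and V(x) ≥ C₁·|x|^{2κ} for all |x| ≥ C₂. Then for every μ > n(κ+γ)/(2κγ), the integral 𝓘_μ := ∫_{ℝⁿ}∫_{ℝⁿ} (q+A(ξ)+V(x))^{-μ} dx dξ is finite. -/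
open MeasureTheory
noncomputable section

/-!
Split `μ = a + b` with `2κa > n` and `2γb > n`. Since `V x + (q + A ξ)` is bounded below by a
positive constant, a constant can be moved from one summand to the other so that `f = V + t` and
`g = q + A - t` are both bounded below by a positive constant. Then
`(f + g)^(-μ) ≤ f^(-a) * g^(-b)`, and the two factors decay at least as fast as
`(1 + |x|)^(-2κa)` and `(1 + |ξ|)^(-2γb)`, which are integrable.
-/

open Asymptotics Bornology Filter Module

section Growth

variable {X : Type*} [SeminormedAddCommGroup X] {f : X → ℝ} {p : ℝ}

theorem isBigO_cobounded_norm_rpow_of_mul_le {C R : ℝ} (hC : 0 < C)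
    (hf : ∀ x, R ≤ ‖x‖ → C * ‖x‖ ^ p ≤ f x) :
    (fun x ↦ ‖x‖ ^ p) =O[cobounded X] f := by
  refine .of_bound C⁻¹ ?_
  filter_upwards [eventually_cobounded_le_norm R] with x hx
  rw [Real.norm_of_nonneg (by positivity), le_inv_mul_iff₀ hC]
  exact (hf x hx).trans (Real.le_norm_self _)

theorem isBigO_cobounded_norm_rpow_const_add (hp : 0 < p)
    (hf : (fun x ↦ ‖x‖ ^ p) =O[cobounded X] f) (t : ℝ) :
    (fun x ↦ ‖x‖ ^ p) =O[cobounded X] fun x ↦ t + f x := by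
  have norm_rpow_tendsto : Tendsto (fun x : X ↦ ‖x‖ ^ p) (cobounded X) atTop :=
    (tendsto_rpow_atTop hp).comp tendsto_norm_cobounded_atTop
  have const_isLittleO : (fun _ : X ↦ t) =o[cobounded X] fun x ↦ ‖x‖ ^ p :=
    isLittleO_const_left.2 <| .inr <| tendsto_norm_atTop_atTop.comp norm_rpow_tendsto
  exact hf.trans (const_isLittleO.trans_isBigO hf).right_isBigO_add

theorem isBigO_cobounded_one_add_norm_rpow (hp : 0 ≤ p) :
    (fun x : X ↦ (1 + ‖x‖) ^ p) =O[cobounded X] fun x ↦ ‖x‖ ^ p := by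
  have one_isBigO : (fun _ : X ↦ (1 : ℝ)) =O[cobounded X] fun x ↦ ‖x‖ :=
    (isLittleO_const_left.2 <| .inr <|
      tendsto_norm_atTop_atTop.comp tendsto_norm_cobounded_atTop).isBigO
  exact (one_isBigO.add (isBigO_refl _ _)).rpow hp (.of_forall norm_nonneg)

theorem isBigO_top_one_add_norm_rpow {c : ℝ} (hp : 0 ≤ p) (hc : 0 < c) (hcf : ∀ x, c ≤ f x)
    (hf : (fun x ↦ ‖x‖ ^ p) =O[cobounded X] f) :
    (fun x ↦ (1 + ‖x‖) ^ p) =O[⊤] f := by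
  obtain ⟨K, hK⟩ := ((isBigO_cobounded_one_add_norm_rpow hp).trans hf).bound
  obtain ⟨R, -, hR⟩ := hasBasis_cobounded_norm.eventually_iff.1 hK
  refine isBigO_top.2 ⟨max K ((1 + R) ^ p / c), fun x ↦ ?_⟩
  rcases le_total R ‖x‖ with hx | hx
  · exact (hR hx).trans (by gcongr; exact le_max_left _ _)
  · have hR₀ : 0 ≤ R := (norm_nonneg x).trans hx
    calc ‖(1 + ‖x‖) ^ p‖ = (1 + ‖x‖) ^ p := Real.norm_of_nonneg (by positivity)
      _ ≤ (1 + R) ^ p := by gcongr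
      _ = (1 + R) ^ p / c * c := by field_simp
      _ ≤ max K ((1 + R) ^ p / c) * ‖f x‖ := by
        gcongr
        · exact le_max_right _ _
        · exact (hcf x).trans (Real.le_norm_self _)

end Growth

theorem exists_forall_half_le_add_and_half_le_neg_add {α β : Type*} [Nonempty α] [Nonempty β]
    {f : α → ℝ} {g : β → ℝ} {c : ℝ} (hfg : ∀ x y, c ≤ f x + g y) :
    ∃ t, (∀ x, c / 2 ≤ t + f x) ∧ ∀ y, c / 2 ≤ -t + g y := by
  have sub_le_f (y : β) (x : α) : c - g y ≤ f x := by linarith [hfg x y]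
  have bddBelow_f : BddBelow (Set.range f) :=
    ⟨c - g (Classical.arbitrary β), Set.forall_mem_range.2 (sub_le_f _)⟩
  refine ⟨c / 2 - ⨅ x, f x, fun x ↦ ?_, fun y ↦ ?_⟩
  · linarith [ciInf_le bddBelow_f x]
  · linarith [le_ciInf (sub_le_f y)]

theorem exists_add_eq_and_lt_mul_and_lt_mul {m n p r s : ℝ} (hp : 0 < p) (hr : 0 < r)
    (hs : m / p + n / r < s) :
    ∃ a b, a + b = s ∧ m < p * a ∧ n < r * b := by
  obtain ⟨a, hma, has⟩ := exists_between (lt_sub_iff_add_lt.2 hs)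
  exact ⟨a, s - a, by ring, (div_lt_iff₀' hp).1 hma, (div_lt_iff₀' hr).1 (by linarith)⟩

theorem add_rpow_neg_add_le_mul {u v a b : ℝ} (hu : 0 < u) (hv : 0 < v) (ha : 0 ≤ a)
    (hb : 0 ≤ b) : (u + v) ^ (-(a + b)) ≤ u ^ (-a) * v ^ (-b) := by
  rw [neg_add, Real.rpow_add (by positivity)]
  gcongr ?_ * ?_
  · exact Real.rpow_le_rpow_of_nonpos hu (by linarith) (by linarith)
  · exact Real.rpow_le_rpow_of_nonpos hv (by linarith) (by linarith)

theorem integrable_prod_add_rpow_neg {α β : Type*} [MeasurableSpace α] [MeasurableSpace β]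
    {μ : Measure α} {ν : Measure β} [SFinite ν] {f : α → ℝ} {g : β → ℝ} {a b : ℝ}
    (hf : ∀ x, 0 < f x) (hg : ∀ y, 0 < g y) (hfm : AEMeasurable f μ) (hgm : AEMeasurable g ν)
    (ha : 0 ≤ a) (hb : 0 ≤ b) (hfi : Integrable (fun x ↦ f x ^ (-a)) μ)
    (hgi : Integrable (fun y ↦ g y ^ (-b)) ν) :
    Integrable (fun z : α × β ↦ (f z.1 + g z.2) ^ (-(a + b))) (μ.prod ν) := by
  refine (hfi.mul_prod hgi).mono' ?_ (.of_forall fun z ↦ ?_)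
  · exact ((hfm.comp_fst.add hgm.comp_snd).pow_const _).aestronglyMeasurable
  · have := hf z.1
    have := hg z.2
    rw [Real.norm_of_nonneg (by positivity)]
    exact add_rpow_neg_add_le_mul (hf _) (hg _) ha hb

section Haar

variable {X Y : Type*}
  [NormedAddCommGroup X] [NormedSpace ℝ X] [FiniteDimensional ℝ X] [MeasurableSpace X]
  [BorelSpace X] {μ : Measure X} [μ.IsAddHaarMeasure]
  [NormedAddCommGroup Y] [NormedSpace ℝ Y] [FiniteDimensional ℝ Y] [MeasurableSpace Y]
  [BorelSpace Y] {ν : Measure Y} [ν.IsAddHaarMeasure]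

theorem integrable_rpow_neg_of_isBigO {f : X → ℝ} {p a : ℝ} (hf : ∀ x, 0 ≤ f x)
    (hfm : AEMeasurable f μ) (hpf : (fun x ↦ (1 + ‖x‖) ^ p) =O[⊤] f) (ha : 0 ≤ a)
    (hpa : finrank ℝ X < p * a) : Integrable (fun x ↦ f x ^ (-a)) μ := by
  have rpow_isBigO : (fun x ↦ (1 + ‖x‖) ^ (p * a)) =O[⊤] fun x ↦ f x ^ a :=
    (hpf.rpow ha (.of_forall hf)).congr_left fun x ↦ (Real.rpow_mul (by positivity) _ _).symm
  have rpow_neg_isBigO : (fun x ↦ f x ^ (-a)) =O[⊤] fun x ↦ (1 + ‖x‖) ^ (-(p * a)) := by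
    refine (rpow_isBigO.inv_rev (.of_forall fun x hx ↦ ?_)).congr
      (fun x ↦ (Real.rpow_neg (hf x) a).symm) (fun x ↦ (Real.rpow_neg (by positivity) _).symm)
    exact absurd hx (by positivity)
  exact rpow_neg_isBigO.integrable (hfm.pow_const _).aestronglyMeasurable
    (integrable_one_add_norm hpa)

theorem statement10_general {f : X → ℝ} {g : Y → ℝ} {p r c s : ℝ} (hp : 0 < p) (hr : 0 < r)
    (hc : 0 < c) (hfm : AEMeasurable f μ) (hgm : AEMeasurable g ν) (hfg : ∀ x y, c ≤ f x + g y)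
    (hf : (fun x ↦ ‖x‖ ^ p) =O[cobounded X] f) (hg : (fun y ↦ ‖y‖ ^ r) =O[cobounded Y] g)
    (hs : finrank ℝ X / p + finrank ℝ Y / r < s) :
    Integrable (fun z : X × Y ↦ (f z.1 + g z.2) ^ (-s)) (μ.prod ν) := by
  obtain ⟨t, hft, hgt⟩ := exists_forall_half_le_add_and_half_le_neg_add hfg
  obtain ⟨a, b, rfl, hpa, hrb⟩ := exists_add_eq_and_lt_mul_and_lt_mul hp hr hs
  have ha : 0 ≤ a := (pos_of_mul_pos_right ((Nat.cast_nonneg _).trans_lt hpa) hp.le).le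
  have hb : 0 ≤ b := (pos_of_mul_pos_right ((Nat.cast_nonneg _).trans_lt hrb) hr.le).le
  have hc₂ : 0 < c / 2 := half_pos hc
  have hf_pos (x : X) : 0 < t + f x := hc₂.trans_le (hft x)
  have hg_pos (y : Y) : 0 < -t + g y := hc₂.trans_le (hgt y)
  have hf_growth : (fun x ↦ (1 + ‖x‖) ^ p) =O[⊤] fun x ↦ t + f x :=
    isBigO_top_one_add_norm_rpow hp.le hc₂ hft (isBigO_cobounded_norm_rpow_const_add hp hf t)
  have hg_growth : (fun y ↦ (1 + ‖y‖) ^ r) =O[⊤] fun y ↦ -t + g y :=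
    isBigO_top_one_add_norm_rpow hr.le hc₂ hgt (isBigO_cobounded_norm_rpow_const_add hr hg (-t))
  have hf_int : Integrable (fun x ↦ (t + f x) ^ (-a)) μ :=
    integrable_rpow_neg_of_isBigO (fun x ↦ (hf_pos x).le) (hfm.const_add t) hf_growth ha hpa
  have hg_int : Integrable (fun y ↦ (-t + g y) ^ (-b)) ν :=
    integrable_rpow_neg_of_isBigO (fun y ↦ (hg_pos y).le) (hgm.const_add (-t)) hg_growth hb hrb
  refine (integrable_prod_add_rpow_neg hf_pos hg_pos (hfm.const_add t) (hgm.const_add (-t)) ha hb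
    hf_int hg_int).congr (.of_forall fun z ↦ ?_)
  ring_nf

end Haar

/-- under condition (C*) (power lower bounds for A and V at infinity),
for every μ > n(κ+γ)/(2κγ) the integral ∫∫ (q+A(ξ)+V(x))^{-μ} dx dξ is finite. -/
theorem statement10 {n : ℕ} (hn : 1 ≤ n) (κ γ q : ℝ) (hκ : 0 < κ) (hγ : 0 < γ)
    (hq : 0 < q) (A V : E n → ℝ) (hA : Continuous A) (hV : Continuous V)
    (hM : ∀ x ξ : E n, 1 ≤ q + V x + A ξ)
    (C₁ C₂ : ℝ) (hC₁ : 0 < C₁) (hC₂ : 0 < C₂)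
    (hAlow : ∀ ξ : E n, C₂ ≤ ‖ξ‖ → C₁ * ‖ξ‖ ^ (2 * γ) ≤ A ξ)
    (hVlow : ∀ x : E n, C₂ ≤ ‖x‖ → C₁ * ‖x‖ ^ (2 * κ) ≤ V x) :
    ∀ μ : ℝ, n * (κ + γ) / (2 * κ * γ) < μ →
      Integrable (fun p : E n × E n => (q + A p.2 + V p.1) ^ (-μ)) := by
  intro μ hμ
  have exponent_lt : (finrank ℝ (E n) / (2 * κ) + finrank ℝ (E n) / (2 * γ) : ℝ) < μ := by
    convert hμ using 1
    rw [finrank_euclideanSpace_fin]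
    field_simp
    ring
  have hqA_growth : (fun ξ ↦ ‖ξ‖ ^ (2 * γ)) =O[cobounded (E n)] fun ξ ↦ q + A ξ :=
    isBigO_cobounded_norm_rpow_const_add (by positivity)
      (isBigO_cobounded_norm_rpow_of_mul_le hC₁ hAlow) q
  simpa only [Measure.volume_eq_prod, add_comm (V _)] using
    statement10_general (μ := volume) (ν := volume) (by positivity) (by positivity) one_pos
      hV.aemeasurable (hA.const_add q).aemeasurable (fun x ξ ↦ (hM x ξ).trans_eq (by ring))
      (isBigO_cobounded_norm_rpow_of_mul_le hC₁ hVlow) hqA_growth exponent_lt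
end
end

section
/- Let n ≥ 1 and κ, γ, μ > 0. The integral ∫_{ℝⁿ}∫_{ℝⁿ} (1+|x|^{2κ}+|ξ|^{2γ})^{-μ} dx dξ is finite if and only if μ > n(κ+γ)/(2κγ). -/
open MeasureTheory
noncomputable section

/-!
On `V × W`, with `V` and `W` finite-dimensional, write `w (x, y) = 1 + ‖x‖ ^ p + ‖y‖ ^ q` and
`Q = dim V / p + dim W / q`.

If `Q < s`, split `s = a + b` with `dim V / p < a` and `dim W / q < b`; then `w ^ (-s)` is at most
the product of the integrable functions `(1 + ‖x‖ ^ p) ^ (-a)` and `(1 + ‖y‖ ^ q) ^ (-b)`.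

Since `1 ≤ w`, integrability for some `s ≤ Q` would imply it for `s = Q`. The dilation
`δ (x, y) = (2 ^ (1 / p) • x, 2 ^ (1 / q) • y)` multiplies volumes by `2 ^ Q`, so the functions
`w ^ (-Q)` and `2 ^ Q * (w ∘ δ) ^ (-Q)` would have the same finite integral; but `w ∘ δ < 2 * w`
makes the second one strictly larger everywhere.
-/

open Module (finrank)

section Measure

variable {α : Type*} [MeasurableSpace α] {μ : Measure α}

lemma integrable_rpow_of_exponent_le {w : α → ℝ} (hw : AEMeasurable w μ) (one_le : ∀ x, 1 ≤ w x)
    {r s : ℝ} (hrs : r ≤ s) (hs : Integrable (fun x => w x ^ s) μ) :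
    Integrable (fun x => w x ^ r) μ := by
  refine hs.mono' (hw.pow_const r).aestronglyMeasurable (.of_forall fun x => ?_)
  rw [Real.norm_of_nonneg (Real.rpow_nonneg (zero_le_one.trans (one_le x)) r)]
  exact Real.rpow_le_rpow_of_exponent_le (one_le x) hrs

lemma not_integrable_of_lt_mul_comp [NeZero μ] {T : α → α} {c : ℝ} (hc : 0 < c)
    (hT : MeasurePreserving T μ (ENNReal.ofReal c⁻¹ • μ)) {f : α → ℝ}
    (hlt : ∀ x, f x < c * f (T x)) : ¬ Integrable f μ := by
  intro hf
  have hf_smul : Integrable f (ENNReal.ofReal c⁻¹ • μ) := hf.smul_measure ENNReal.ofReal_ne_top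
  have hfT : Integrable (fun x => c * f (T x)) μ :=
    (hT.integrable_comp_of_integrable hf_smul).const_mul c
  have integral_eq : ∫ x, c * f (T x) ∂μ = ∫ x, f x ∂μ := by
    rw [← hT.map_eq] at hf_smul
    rw [integral_const_mul, ← integral_map hT.aemeasurable hf_smul.aestronglyMeasurable, hT.map_eq,
      integral_smul_measure, ENNReal.toReal_ofReal (inv_pos.2 hc).le, smul_eq_mul,
      mul_inv_cancel_left₀ hc.ne']
  have hdiff : ∫ x, (c * f (T x) - f x) ∂μ = 0 := by
    rw [integral_sub hfT hf, integral_eq, sub_self]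
  rw [integral_eq_zero_iff_of_nonneg (fun x => (sub_pos.2 (hlt x)).le) (hfT.sub hf)] at hdiff
  obtain ⟨x, hx⟩ := hdiff.exists
  exact (sub_pos.2 (hlt x)).ne' hx

end Measure

lemma add_rpow_le_two_rpow_mul_add {x y p : ℝ} (hx : 0 ≤ x) (hy : 0 ≤ y) (hp : 0 ≤ p) :
    (x + y) ^ p ≤ 2 ^ p * (x ^ p + y ^ p) := by
  wlog hxy : x ≤ y generalizing x y
  · simpa only [add_comm] using this hy hx (le_of_not_ge hxy)
  calc (x + y) ^ p ≤ (2 * y) ^ p := Real.rpow_le_rpow (by positivity) (by linarith) hp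
    _ = 2 ^ p * y ^ p := Real.mul_rpow zero_le_two hy
    _ ≤ 2 ^ p * (x ^ p + y ^ p) := by
      gcongr
      exact le_add_of_nonneg_left (Real.rpow_nonneg hx p)

section Normed

variable {V W : Type*} [NormedAddCommGroup V] [NormedAddCommGroup W] {p q : ℝ}

/-- The weight `1 + ‖x‖ ^ p + ‖y‖ ^ q` on a product, with separate growth rates in the two
factors. -/
def anisotropicWeight (p q : ℝ) (z : V × W) : ℝ := 1 + ‖z.1‖ ^ p + ‖z.2‖ ^ q

lemma one_le_anisotropicWeight (p q : ℝ) (z : V × W) : 1 ≤ anisotropicWeight p q z := by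
  have hx : 0 ≤ ‖z.1‖ ^ p := by positivity
  have hy : 0 ≤ ‖z.2‖ ^ q := by positivity
  rw [anisotropicWeight]
  linarith

lemma anisotropicWeight_pos (p q : ℝ) (z : V × W) : 0 < anisotropicWeight p q z :=
  zero_lt_one.trans_le (one_le_anisotropicWeight p q z)

lemma measurable_anisotropicWeight [MeasurableSpace V] [OpensMeasurableSpace V]
    [MeasurableSpace W] [OpensMeasurableSpace W] (p q : ℝ) :
    Measurable (anisotropicWeight p q : V × W → ℝ) := by
  unfold anisotropicWeight
  fun_prop

lemma anisotropicWeight_rpow_neg_add_le {a b : ℝ} (ha : 0 ≤ a) (hb : 0 ≤ b) (z : V × W) :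
    anisotropicWeight p q z ^ (-(a + b)) ≤ (1 + ‖z.1‖ ^ p) ^ (-a) * (1 + ‖z.2‖ ^ q) ^ (-b) := by
  have hx : 0 ≤ ‖z.1‖ ^ p := by positivity
  have hy : 0 ≤ ‖z.2‖ ^ q := by positivity
  rw [neg_add, Real.rpow_add (anisotropicWeight_pos p q z), anisotropicWeight]
  gcongr ?_ * ?_ <;>
    exact Real.rpow_le_rpow_of_nonpos (by positivity) (by linarith) (by linarith)

variable [NormedSpace ℝ V] [NormedSpace ℝ W] {t : ℝ}

/-- The anisotropic dilation `(x, y) ↦ (t ^ (1 / p) • x, t ^ (1 / q) • y)`, which for `0 ≤ t`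
multiplies both `‖x‖ ^ p` and `‖y‖ ^ q` by `t`. -/
def anisotropicDilation (p q t : ℝ) : V × W → V × W :=
  Prod.map (t ^ p⁻¹ • ·) (t ^ q⁻¹ • ·)

lemma norm_rpow_inv_smul_rpow (ht : 0 ≤ t) (hp : p ≠ 0) (x : V) :
    ‖t ^ p⁻¹ • x‖ ^ p = t * ‖x‖ ^ p := by
  rw [norm_smul, Real.norm_of_nonneg (by positivity), Real.mul_rpow (by positivity) (norm_nonneg x),
    Real.rpow_inv_rpow ht hp]

lemma anisotropicWeight_dilation_lt (hp : p ≠ 0) (hq : q ≠ 0) (ht : 1 < t) (z : V × W) :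
    anisotropicWeight p q (anisotropicDilation p q t z) < t * anisotropicWeight p q z := by
  have ht₀ : 0 ≤ t := zero_le_one.trans ht.le
  simp only [anisotropicWeight, anisotropicDilation, Prod.map_fst, Prod.map_snd,
    norm_rpow_inv_smul_rpow ht₀ hp, norm_rpow_inv_smul_rpow ht₀ hq]
  linarith

lemma anisotropicWeight_rpow_neg_lt_mul_dilation (hp : p ≠ 0) (hq : q ≠ 0) (ht : 1 < t) {s : ℝ}
    (hs : 0 < s) (z : V × W) :
    anisotropicWeight p q z ^ (-s) <
      t ^ s * anisotropicWeight p q (anisotropicDilation p q t z) ^ (-s) := by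
  have ht₀ : 0 < t := zero_lt_one.trans ht
  rw [← inv_mul_lt_iff₀ (by positivity), ← Real.rpow_neg ht₀.le,
    ← Real.mul_rpow ht₀.le (anisotropicWeight_pos p q z).le]
  exact Real.rpow_lt_rpow_of_neg (anisotropicWeight_pos p q _)
    (anisotropicWeight_dilation_lt hp hq ht z) (neg_lt_zero.2 hs)

end Normed

section Haar

variable {V W : Type*} [NormedAddCommGroup V] [NormedSpace ℝ V] [FiniteDimensional ℝ V]
  [MeasurableSpace V] [BorelSpace V] [NormedAddCommGroup W] [NormedSpace ℝ W]
  [FiniteDimensional ℝ W] [MeasurableSpace W] [BorelSpace W]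
  (μ : Measure V) [μ.IsAddHaarMeasure] (ν : Measure W) [ν.IsAddHaarMeasure] {p q : ℝ}

lemma integrable_one_add_norm_rpow_rpow_neg (hp : 0 < p) {a : ℝ} (ha : finrank ℝ V / p < a) :
    Integrable (fun x : V => (1 + ‖x‖ ^ p) ^ (-a)) μ := by
  have ha₀ : 0 < a := lt_of_le_of_lt (by positivity) ha
  have hdim : (finrank ℝ V : ℝ) < p * a := (div_lt_iff₀' hp).1 ha
  refine ((integrable_one_add_norm (μ := μ) hdim).const_mul ((2 ^ p) ^ a)).mono'
    (Measurable.aestronglyMeasurable (by fun_prop)) (.of_forall fun x => ?_)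
  rw [Real.norm_of_nonneg (by positivity)]
  have norm_bound : (1 + ‖x‖) ^ p ≤ 2 ^ p * (1 + ‖x‖ ^ p) := by
    simpa only [Real.one_rpow] using add_rpow_le_two_rpow_mul_add zero_le_one (norm_nonneg x) hp.le
  calc (1 + ‖x‖ ^ p) ^ (-a)
      = (2 ^ p) ^ a * (2 ^ p * (1 + ‖x‖ ^ p)) ^ (-a) := by
        rw [Real.mul_rpow (by positivity) (by positivity),
          Real.rpow_neg (x := 2 ^ p) (by positivity), mul_inv_cancel_left₀ (by positivity)]
    _ ≤ (2 ^ p) ^ a * ((1 + ‖x‖) ^ p) ^ (-a) := by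
        gcongr ?_ * ?_
        exact Real.rpow_le_rpow_of_nonpos (by positivity) norm_bound (by linarith)
    _ = (2 ^ p) ^ a * (1 + ‖x‖) ^ (-(p * a)) := by
        rw [← Real.rpow_mul (x := 1 + ‖x‖) (by positivity), mul_neg]

lemma measurePreserving_prodMap_smul {a b : ℝ} (ha : a ≠ 0) (hb : b ≠ 0) :
    MeasurePreserving (Prod.map (a • ·) (b • ·) : V × W → V × W) (μ.prod ν)
      (ENNReal.ofReal |(a ^ finrank ℝ V * b ^ finrank ℝ W)⁻¹| • μ.prod ν) := by
  refine ⟨by fun_prop, ?_⟩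
  rw [← Measure.map_prod_map _ _ (by fun_prop) (by fun_prop), Measure.map_addHaar_smul _ ha,
    Measure.map_addHaar_smul _ hb, Measure.prod_smul_left, Measure.prod_smul_right, smul_smul,
    ← ENNReal.ofReal_mul (abs_nonneg _), ← abs_mul, mul_inv]

lemma measurePreserving_anisotropicDilation (p q : ℝ) {t : ℝ} (ht : 0 < t) :
    MeasurePreserving (anisotropicDilation p q t : V × W → V × W) (μ.prod ν)
      (ENNReal.ofReal (t ^ (finrank ℝ V / p + finrank ℝ W / q))⁻¹ • μ.prod ν) := by
  have jacobian : (t ^ p⁻¹) ^ finrank ℝ V * (t ^ q⁻¹) ^ finrank ℝ W =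
      t ^ (finrank ℝ V / p + finrank ℝ W / q) := by
    rw [← Real.rpow_mul_natCast ht.le, ← Real.rpow_mul_natCast ht.le, ← Real.rpow_add ht,
      inv_mul_eq_div, inv_mul_eq_div]
  have hδ := measurePreserving_prodMap_smul μ ν (Real.rpow_pos_of_pos ht p⁻¹).ne'
    (Real.rpow_pos_of_pos ht q⁻¹).ne'
  rwa [jacobian, abs_of_pos (by positivity)] at hδ

lemma integrable_anisotropicWeight_rpow_neg (hp : 0 < p) (hq : 0 < q) {s : ℝ}
    (hs : finrank ℝ V / p + finrank ℝ W / q < s) :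
    Integrable (fun z : V × W => anisotropicWeight p q z ^ (-s)) (μ.prod ν) := by
  obtain ⟨a, ha, has⟩ := exists_between (lt_sub_iff_add_lt.2 hs)
  obtain ⟨b, rfl⟩ : ∃ b, s = a + b := ⟨s - a, by ring⟩
  have hb : finrank ℝ W / q < b := by linarith
  have ha₀ : 0 ≤ a := le_trans (by positivity) ha.le
  have hb₀ : 0 ≤ b := le_trans (by positivity) hb.le
  refine ((integrable_one_add_norm_rpow_rpow_neg μ hp ha).mul_prod
    (integrable_one_add_norm_rpow_rpow_neg ν hq hb)).mono'
    ((measurable_anisotropicWeight p q).pow_const _).aestronglyMeasurable (.of_forall fun z => ?_)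
  rw [Real.norm_of_nonneg (Real.rpow_nonneg (anisotropicWeight_pos p q z).le _)]
  exact anisotropicWeight_rpow_neg_add_le ha₀ hb₀ z

lemma not_integrable_anisotropicWeight_rpow_neg_critical [Nontrivial (V × W)] (hp : 0 < p)
    (hq : 0 < q) :
    ¬ Integrable (fun z : V × W =>
      anisotropicWeight p q z ^ (-(finrank ℝ V / p + finrank ℝ W / q))) (μ.prod ν) := by
  have critical_pos : 0 < finrank ℝ V / p + finrank ℝ W / q := by
    have dim_pos : 0 < finrank ℝ V + finrank ℝ W := by
      rw [← Module.finrank_prod]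
      exact Module.finrank_pos
    rcases Nat.add_pos_iff_pos_or_pos.1 dim_pos with hV | hW <;> positivity
  exact not_integrable_of_lt_mul_comp (by positivity)
    (measurePreserving_anisotropicDilation μ ν p q zero_lt_two)
    (anisotropicWeight_rpow_neg_lt_mul_dilation hp.ne' hq.ne' one_lt_two critical_pos)

theorem statement11_general [Nontrivial (V × W)] (hp : 0 < p) (hq : 0 < q) (s : ℝ) :
    Integrable (fun z : V × W => (1 + ‖z.1‖ ^ p + ‖z.2‖ ^ q) ^ (-s)) (μ.prod ν) ↔
      finrank ℝ V / p + finrank ℝ W / q < s := by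
  refine ⟨fun hs => ?_, integrable_anisotropicWeight_rpow_neg μ ν hp hq⟩
  by_contra! hle
  exact not_integrable_anisotropicWeight_rpow_neg_critical μ ν hp hq <|
    integrable_rpow_of_exponent_le (measurable_anisotropicWeight p q).aemeasurable
      (one_le_anisotropicWeight p q) (neg_le_neg hle) hs

end Haar

/-- ∫∫ (1+|x|^{2κ}+|ξ|^{2γ})^{-μ} dx dξ < ∞ iff μ > n(κ+γ)/(2κγ). -/
theorem statement11 {n : ℕ} (hn : 1 ≤ n) (κ γ μ : ℝ) (hκ : 0 < κ) (hγ : 0 < γ)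
    (hμ : 0 < μ) :
    Integrable (fun p : E n × E n => (1 + ‖p.1‖ ^ (2 * κ) + ‖p.2‖ ^ (2 * γ)) ^ (-μ)) ↔
      n * (κ + γ) / (2 * κ * γ) < μ := by
  have : NeZero n := ⟨Nat.one_le_iff_ne_zero.1 hn⟩
  have threshold : n * (κ + γ) / (2 * κ * γ) = n / (2 * κ) + n / (2 * γ) := by
    field_simp
    ring
  rw [threshold, Measure.volume_eq_prod,
    statement11_general volume volume (by positivity) (by positivity), finrank_euclideanSpace_fin]
end
end
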